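/- Assume p^2·e_0 − (p+1)·b_2 + (p−1)·b_1 > 0. Then the associated order 𝔄_{K_2/K_0} = { α ∈ K_0[G] : α·𝔒_2 ⊆ 𝔒_2 } of 𝔒_2 has 𝔒_0-basis { π_0^{−w_j}·Ψ^{(j)} : 0 ≤ j ≤ p^2 − 1 }. -/

import Mathlib

/-- A normalized discrete valuation on a field `K`, recorded as a function
`v : K → ℤ`.  The value of `v` at `0` is irrelevant: all conditions below only
refer to nonzero elements (the convention `v 0 = ∞` being understood). -/
structure IsDiscVal {K : Type*} [Field K] (v : K → ℤ) : Prop where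
  map_one : v 1 = 0
  map_mul : ∀ x y : K, x ≠ 0 → y ≠ 0 → v (x * y) = v x + v y
  min_le_add : ∀ x y : K, x ≠ 0 → y ≠ 0 → x + y ≠ 0 → min (v x) (v y) ≤ v (x + y)
  exists_uniformizer : ∃ π : K, π ≠ 0 ∧ v π = 1

/-!
Put `X = x₁` and `Y = x₂ - μ x₁`. The defining equations give `v₂ X = -p b₁` and `v₂ Y = -b₂`, so
the products `(Y choose i) (X choose j)` with `i, j < p` have valuations distinct modulo `p ^ 2`
and form a basis of `K₂` that detects valuations. Up to terms of higher valuation, `σ` acts by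
`X ↦ X + 1` and `Y ↦ Y - μ`, and `σ ^ p` fixes `X` and acts by `Y ↦ Y + 1`. Hence `Ψ₂ = σ ^ p - 1`
lowers `i` by Pascal's rule, and since the truncated binomial power `(σ ^ p) ^ [μ]` cancels the
shift by `-μ`, `Ψ₁ = σ (σ ^ p) ^ [μ] - 1` lowers `j`. The monomials in `Ψ₁` and `Ψ₂` are therefore
a scaffold; the hypothesis on `e₀` makes its precision large enough for integrality of an operator
to be read off its coefficients one at a time.
-/

/-- `x` has valuation at least `r`, with the convention `v 0 = ∞`. -/
def ValGe {K : Type*} [Field K] (v : K → ℤ) (r : ℤ) (x : K) : Prop :=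
  x = 0 ∨ r ≤ v x

namespace ValGe

variable {K : Type*} [Field K] {v : K → ℤ} {r s : ℤ} {x : K}

lemma zero : ValGe v r 0 := Or.inl rfl

lemma mono (h : ValGe v s x) (hrs : r ≤ s) : ValGe v r x :=
  h.imp_right hrs.trans

lemma le (h : ValGe v r x) (hx : x ≠ 0) : r ≤ v x := h.resolve_left hx

end ValGe

namespace IsDiscVal

variable {K : Type*} [Field K] {v : K → ℤ}

open scoped Classical in
/-- The Mathlib valuation attached to `v`: it takes the value `⊤` at `0`. -/
noncomputable def addValuation (hv : IsDiscVal v) : AddValuation K (WithTop ℤ) :=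
  AddValuation.of (fun x => if x = 0 then ⊤ else (v x : WithTop ℤ)) (if_pos rfl)
    (by simp [hv.map_one])
    (fun x y => by
      by_cases hx : x = 0
      · simp [hx]
      by_cases hy : y = 0
      · simp [hy]
      by_cases h : x + y = 0
      · simp [h]
      simpa [hx, hy, h] using hv.min_le_add x y hx hy h)
    (fun x y => by
      by_cases hx : x = 0
      · simp [hx]
      by_cases hy : y = 0
      · simp [hy]
      simp [hx, hy, hv.map_mul x y hx hy])

lemma addValuation_apply (hv : IsDiscVal v) {x : K} (hx : x ≠ 0) :
    hv.addValuation x = (v x : WithTop ℤ) := if_neg hx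

lemma valGe_iff (hv : IsDiscVal v) {r : ℤ} {x : K} :
    ValGe v r x ↔ (r : WithTop ℤ) ≤ hv.addValuation x := by
  rcases eq_or_ne x 0 with rfl | hx
  · simp [ValGe]
  · simp [ValGe, hx, hv.addValuation_apply hx]

lemma map_neg (hv : IsDiscVal v) (x : K) : v (-x) = v x := by
  rcases eq_or_ne x 0 with rfl | hx
  · rw [neg_zero]
  · have h := hv.addValuation.map_neg x
    rwa [hv.addValuation_apply hx, hv.addValuation_apply (neg_ne_zero.2 hx),
      WithTop.coe_inj] at h

lemma map_inv (hv : IsDiscVal v) {x : K} (hx : x ≠ 0) : v x⁻¹ = -v x := by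
  have h := hv.map_mul x x⁻¹ hx (inv_ne_zero hx)
  rw [mul_inv_cancel₀ hx, hv.map_one] at h
  omega

lemma map_pow (hv : IsDiscVal v) {x : K} (hx : x ≠ 0) (n : ℕ) : v (x ^ n) = n * v x := by
  have h := hv.addValuation.map_pow x n
  rw [hv.addValuation_apply hx, hv.addValuation_apply (pow_ne_zero n hx), ← WithTop.coe_nsmul,
    WithTop.coe_inj] at h
  rw [h, nsmul_eq_mul]

lemma map_zpow (hv : IsDiscVal v) {x : K} (hx : x ≠ 0) (n : ℤ) : v (x ^ n) = n * v x := by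
  rcases n with n | n
  · simpa using hv.map_pow hx n
  · rw [zpow_negSucc, hv.map_inv (pow_ne_zero _ hx), hv.map_pow hx, Int.negSucc_eq]
    push_cast
    ring

lemma valGe_one (hv : IsDiscVal v) : ValGe v 0 1 := Or.inr hv.map_one.ge

variable {r s : ℤ} {x y : K}

lemma valGe_neg (hv : IsDiscVal v) (h : ValGe v r x) : ValGe v r (-x) := by
  rw [hv.valGe_iff, AddValuation.map_neg]
  exact hv.valGe_iff.1 h

lemma valGe_add (hv : IsDiscVal v) (hx : ValGe v r x) (hy : ValGe v r y) : ValGe v r (x + y) :=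
  hv.valGe_iff.2 (hv.addValuation.map_le_add (hv.valGe_iff.1 hx) (hv.valGe_iff.1 hy))

lemma valGe_sub (hv : IsDiscVal v) (hx : ValGe v r x) (hy : ValGe v r y) : ValGe v r (x - y) :=
  hv.valGe_iff.2 (hv.addValuation.map_le_sub (hv.valGe_iff.1 hx) (hv.valGe_iff.1 hy))

lemma valGe_sum (hv : IsDiscVal v) {ι : Type*} {s : Finset ι} {f : ι → K}
    (h : ∀ i ∈ s, ValGe v r (f i)) : ValGe v r (∑ i ∈ s, f i) :=
  hv.valGe_iff.2 (hv.addValuation.map_le_sum fun i hi => hv.valGe_iff.1 (h i hi))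

lemma valGe_mul (hv : IsDiscVal v) (hx : ValGe v r x) (hy : ValGe v s y) :
    ValGe v (r + s) (x * y) := by
  rw [hv.valGe_iff, AddValuation.map_mul, WithTop.coe_add]
  exact add_le_add (hv.valGe_iff.1 hx) (hv.valGe_iff.1 hy)

lemma valGe_pow (hv : IsDiscVal v) (hx : ValGe v r x) (n : ℕ) : ValGe v (n * r) (x ^ n) := by
  induction n with
  | zero => simpa using hv.valGe_one
  | succ n ih =>
    rw [pow_succ]
    exact (hv.valGe_mul ih hx).mono (by push_cast; linarith)

lemma valGe_natCast (hv : IsDiscVal v) (n : ℕ) : ValGe v 0 (n : K) := by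
  induction n with
  | zero => exact Or.inl Nat.cast_zero
  | succ n ih => rw [Nat.cast_succ]; exact hv.valGe_add ih hv.valGe_one

lemma valGe_intCast (hv : IsDiscVal v) (n : ℤ) : ValGe v 0 (n : K) := by
  rcases n with n | n
  · simpa using hv.valGe_natCast n
  · rw [Int.cast_negSucc]
    exact hv.valGe_neg (hv.valGe_natCast _)

lemma map_add_of_valGe (hv : IsDiscVal v) (hx : x ≠ 0) (hy : ValGe v (v x + 1) y) :
    x + y ≠ 0 ∧ v (x + y) = v x := by
  have hlt : hv.addValuation x < hv.addValuation y := by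
    rw [hv.addValuation_apply hx]
    exact lt_of_lt_of_le (WithTop.coe_lt_coe.2 (lt_add_one _)) (hv.valGe_iff.1 hy)
  have h := hv.addValuation.map_add_eq_of_lt_left hlt
  rw [hv.addValuation_apply hx] at h
  have hne : x + y ≠ 0 := fun h0 => by simp [h0] at h
  exact ⟨hne, by rwa [hv.addValuation_apply hne, WithTop.coe_inj] at h⟩

lemma map_sub_of_valGe (hv : IsDiscVal v) (hx : x ≠ 0) (hy : ValGe v (v x + 1) y) :
    x - y ≠ 0 ∧ v (x - y) = v x := by
  rw [sub_eq_add_neg]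
  exact hv.map_add_of_valGe hx (hv.valGe_neg hy)

lemma valGe_of_valGe_sum (hv : IsDiscVal v) {ι : Type*} {s : Finset ι} {f : ι → K}
    (hinj : ∀ i ∈ s, ∀ j ∈ s, f i ≠ 0 → f j ≠ 0 → v (f i) = v (f j) → i = j)
    (h : ValGe v r (∑ i ∈ s, f i)) : ∀ i ∈ s, ValGe v r (f i) := by
  classical
  by_contra! hcon
  obtain ⟨i, his, hi⟩ := hcon
  have hfi : f i ≠ 0 := fun h0 => hi (Or.inl h0)
  obtain ⟨k, hk, hmin⟩ := (s.filter (f · ≠ 0)).exists_min_image (fun i => v (f i))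
    ⟨i, by simp [his, hfi]⟩
  rw [Finset.mem_filter] at hk
  have hlt : v (f k) < r := by
    by_contra! hge
    exact hi (Or.inr (hge.trans (hmin i (by simp [his, hfi]))))
  have hrest : ValGe v (v (f k) + 1) (∑ i ∈ s.erase k, f i) := by
    refine hv.valGe_sum fun j hj => ?_
    rw [Finset.mem_erase] at hj
    refine or_iff_not_imp_left.2 fun hfj => ?_
    exact lt_of_le_of_ne (hmin j (by simp [hj.2, hfj]))
      fun heq => hj.1 (hinj k hk.1 j hj.2 hk.2 hfj heq).symm
  rw [← Finset.add_sum_erase s f hk.1] at h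
  obtain ⟨hne, heq⟩ := hv.map_add_of_valGe hk.2 hrest
  exact (heq ▸ h.le hne).not_gt hlt

lemma map_natCast_of_lt [CharZero K] (hv : IsDiscVal v) {p : ℕ} (hp : p.Prime)
    (hvp : 1 ≤ v (p : K)) {k : ℕ} (hk : 0 < k) (hkp : k < p) : v (k : K) = 0 := by
  obtain ⟨a, b, hab⟩ : IsCoprime (k : ℤ) (p : ℤ) :=
    Nat.isCoprime_iff_coprime.2 (Nat.coprime_of_lt_prime hk.ne' hkp hp).symm
  refine le_antisymm ?_ ((hv.valGe_natCast k).le (Nat.cast_ne_zero.2 hk.ne'))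
  by_contra! hpos
  have hab' : (a : K) * k + b * p = 1 := by exact_mod_cast congrArg (Int.cast : ℤ → K) hab
  have h : ValGe v (0 + 1) (1 : K) := by
    rw [← hab']
    exact hv.valGe_add (hv.valGe_mul (hv.valGe_intCast a) (Or.inr hpos))
      (hv.valGe_mul (hv.valGe_intCast b) (Or.inr hvp))
  simpa [hv.map_one] using h.le one_ne_zero

lemma valGe_pow_sub_pow (hv : IsDiscVal v) (hx : ValGe v (-s) x) (hy : ValGe v (-s) y)
    (hxy : ValGe v r (x - y)) (n : ℕ) : ValGe v (r - ((n : ℤ) - 1) * s) (x ^ n - y ^ n) := by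
  induction n with
  | zero => simpa using ValGe.zero
  | succ n ih =>
    have h : x ^ (n + 1) - y ^ (n + 1) = x * (x ^ n - y ^ n) + (x - y) * y ^ n := by ring
    rw [h]
    exact hv.valGe_add ((hv.valGe_mul hx ih).mono (by push_cast; linarith))
      ((hv.valGe_mul hxy (hv.valGe_pow hy n)).mono (by push_cast; linarith))

end IsDiscVal

section Choose

variable {K : Type*} [Field K] [CharZero K]

lemma ring_choose_eq_prod_div (x : K) (n : ℕ) :
    Ring.choose x n = (∏ k ∈ Finset.range n, (x - (k : K))) / (n.factorial : K) := by
  rw [Ring.choose_eq_smul, ← Polynomial.aeval_eq_smeval, Polynomial.aeval_def,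
    Polynomial.eval₂_eq_eval_map, descPochhammer_map, descPochhammer_eval_eq_prod_range,
    smul_eq_mul, div_eq_inv_mul]

lemma ring_choose_succ (x : K) (n : ℕ) :
    Ring.choose x (n + 1) = Ring.choose x n * (x - n) * ((n + 1 : ℕ) : K)⁻¹ := by
  have h := n.cast_add_one_ne_zero (R := K)
  rw [ring_choose_eq_prod_div, ring_choose_eq_prod_div, Finset.prod_range_succ,
    Nat.factorial_succ]
  push_cast
  field_simp

variable {v : K → ℤ} {p : ℕ}

lemma IsDiscVal.valGe_inv_natCast (hv : IsDiscVal v) (hp : p.Prime) (hvp : 1 ≤ v (p : K))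
    {n : ℕ} (hn : 0 < n) (hnp : n < p) : ValGe v 0 (n : K)⁻¹ := by
  refine Or.inr ?_
  rw [hv.map_inv (Nat.cast_ne_zero.2 hn.ne'), hv.map_natCast_of_lt hp hvp hn hnp, neg_zero]

lemma IsDiscVal.valGe_choose (hv : IsDiscVal v) (hp : p.Prime) (hvp : 1 ≤ v (p : K))
    {x : K} {s : ℤ} (hs : 0 ≤ s) (hx : ValGe v (-s) x) {n : ℕ} (hn : n < p) :
    ValGe v (-(n * s)) (Ring.choose x n) := by
  induction n with
  | zero => simpa using hv.valGe_one
  | succ n ih =>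
    rw [ring_choose_succ]
    refine (hv.valGe_mul (hv.valGe_mul (ih (by omega))
      (hv.valGe_sub hx ((hv.valGe_natCast n).mono (by omega))))
      (hv.valGe_inv_natCast hp hvp n.succ_pos hn)).mono ?_
    push_cast
    linarith

lemma IsDiscVal.map_choose (hv : IsDiscVal v) (hp : p.Prime) (hvp : 1 ≤ v (p : K))
    {x : K} (hx0 : x ≠ 0) (hx : v x < 0) {n : ℕ} (hn : n < p) :
    Ring.choose x n ≠ 0 ∧ v (Ring.choose x n) = n * v x := by
  induction n with
  | zero => simpa using hv.map_one
  | succ n ih =>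
    obtain ⟨h0, h1⟩ := ih (by omega)
    obtain ⟨h2, h3⟩ := hv.map_add_of_valGe hx0
      (hv.valGe_neg ((hv.valGe_natCast n).mono (show v x + 1 ≤ 0 by omega)))
    rw [← sub_eq_add_neg] at h2 h3
    have hn0 : ((n + 1 : ℕ) : K) ≠ 0 := Nat.cast_ne_zero.2 n.succ_ne_zero
    rw [ring_choose_succ]
    refine ⟨mul_ne_zero (mul_ne_zero h0 h2) (inv_ne_zero hn0), ?_⟩
    rw [hv.map_mul _ _ (mul_ne_zero h0 h2) (inv_ne_zero hn0), hv.map_mul _ _ h0 h2, h1, h3,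
      hv.map_inv hn0, hv.map_natCast_of_lt hp hvp n.succ_pos hn]
    push_cast
    ring

lemma IsDiscVal.valGe_choose_sub (hv : IsDiscVal v) (hp : p.Prime) (hvp : 1 ≤ v (p : K))
    {x y : K} {r s : ℤ} (hs : 0 ≤ s) (hx : ValGe v (-s) x) (hy : ValGe v (-s) y)
    (hxy : ValGe v r (x - y)) {n : ℕ} (hn : n < p) :
    ValGe v (r - ((n : ℤ) - 1) * s) (Ring.choose x n - Ring.choose y n) := by
  induction n with
  | zero => simpa using ValGe.zero
  | succ n ih =>
    rw [ring_choose_succ, ring_choose_succ, ← sub_mul,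
      show Ring.choose x n * (x - n) - Ring.choose y n * (y - n) =
        (Ring.choose x n - Ring.choose y n) * (x - n) + Ring.choose y n * (x - y) by ring]
    refine (hv.valGe_mul (r := r - n * s) (hv.valGe_add ?_ ?_)
      (hv.valGe_inv_natCast hp hvp n.succ_pos hn)).mono (by push_cast; linarith)
    · exact (hv.valGe_mul (ih (by omega))
        (hv.valGe_sub hx ((hv.valGe_natCast n).mono (by omega)))).mono (by linarith)
    · exact (hv.valGe_mul (hv.valGe_choose hp hvp hs hy (by omega)) hxy).mono (by linarith)

end Choose

section WittAddition

open Polynomial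

variable {K : Type*} [Field K] {p : ℕ}

/-- The polynomial `℘(x) = x ^ p - x`. -/
def artinSchreier (p : ℕ) (x : K) : K := x ^ p - x

/-- The polynomial `D(x, y)`, which is the carry in the addition of Witt vectors of length two. -/
def wittD (p : ℕ) (x y : K) : K := (x ^ p + y ^ p - (x + y) ^ p) / (p : K)

lemma wittD_comm (x y : K) : wittD p x y = wittD p y x := by
  rw [wittD, wittD, add_comm (x ^ p), add_comm x]

lemma IsDiscVal.valGe_aeval {v : K → ℤ} (hv : IsDiscVal v) {x : K} {s : ℤ} (hs : 0 ≤ s)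
    (hx : ValGe v (-s) x) (f : ℤ[X]) {n : ℕ} (hn : f.natDegree ≤ n) :
    ValGe v (-(n * s)) (aeval x f) := by
  rw [aeval_eq_sum_range]
  refine hv.valGe_sum fun i hi => ?_
  rw [Finset.mem_range] at hi
  rw [zsmul_eq_mul]
  refine (hv.valGe_mul (hv.valGe_intCast _) (hv.valGe_pow hx i)).mono ?_
  have : (i : ℤ) ≤ n := by omega
  nlinarith

lemma C_dvd_pow_sub_expand (hp : p.Prime) (f : ℤ[X]) : C (p : ℤ) ∣ f ^ p - expand ℤ p f := by
  have : Fact p.Prime := ⟨hp⟩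
  rw [C_dvd_iff_dvd_coeff]
  intro i
  have h : (f ^ p - expand ℤ p f).map (Int.castRingHom (ZMod p)) = 0 := by
    rw [Polynomial.map_sub, Polynomial.map_pow, map_expand, ← ZMod.expand_card, sub_self]
  have h' := congrArg (fun g => g.coeff i) h
  simp only [coeff_map, coeff_zero, eq_intCast] at h'
  exact (ZMod.intCast_zmod_eq_zero_iff_dvd _ p).1 h'

lemma IsDiscVal.valGe_aeval_pow_sub {v : K → ℤ} (hv : IsDiscVal v) (hp : p.Prime) {x : K} {s : ℤ}
    (hs : 0 ≤ s) (hx : ValGe v (-s) x) (f : ℤ[X]) {n : ℕ} (hn : f.natDegree ≤ n) :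
    ValGe v (v (p : K) - (p * n : ℕ) * s) (aeval x f ^ p - aeval (x ^ p) f) := by
  obtain ⟨g, hg⟩ := C_dvd_pow_sub_expand hp f
  have hgdeg : g.natDegree ≤ p * n := by
    rw [← natDegree_C_mul (a := (p : ℤ)) (by exact_mod_cast hp.ne_zero), ← hg]
    refine (natDegree_sub_le _ _).trans (max_le ?_ ?_)
    · exact natDegree_pow_le.trans (Nat.mul_le_mul_left p hn)
    · rw [natDegree_expand, mul_comm]
      exact Nat.mul_le_mul_left p hn
  have h : aeval x f ^ p - aeval (x ^ p) f = (p : K) * aeval x g := by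
    simpa [expand_aeval] using congrArg (aeval x) hg
  rw [h, sub_eq_add_neg]
  exact hv.valGe_mul (Or.inr le_rfl) (hv.valGe_aeval hs hx g hgdeg)

variable [CharZero K]

lemma add_pow_eq_sub_wittD (hp : p.Prime) (x y : K) :
    (x + y) ^ p = x ^ p + y ^ p - p * wittD p x y := by
  have : (p : K) ≠ 0 := Nat.cast_ne_zero.2 hp.ne_zero
  rw [wittD]
  field_simp
  ring

lemma wittD_cocycle (x y z : K) :
    wittD p x y + wittD p (x + y) z = wittD p (x + z) y + wittD p x z := by
  simp only [wittD]
  rw [add_right_comm x z y]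
  ring

lemma wittD_eq_sum (hp : p.Prime) (x y : K) :
    wittD p x y = -∑ m ∈ Finset.range (p - 1),
      ((p.choose (m + 1) / p : ℕ) : K) * (x ^ (m + 1) * y ^ (p - 1 - m)) := by
  have hp0 : (p : K) ≠ 0 := Nat.cast_ne_zero.2 hp.ne_zero
  obtain ⟨k, rfl⟩ : ∃ k, p = k + 1 := ⟨p - 1, by have := hp.pos; omega⟩
  rw [wittD, add_pow, Finset.sum_range_succ, Finset.sum_range_succ', div_eq_iff hp0]
  simp only [Nat.add_sub_cancel, Nat.choose_self, Nat.choose_zero_right, Nat.sub_self,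
    Nat.sub_zero, pow_zero, Nat.cast_one, mul_one, one_mul, Nat.add_sub_add_right]
  rw [neg_mul, Finset.sum_mul]
  have h : ∀ m ∈ Finset.range k, x ^ (m + 1) * y ^ (k - m) * ((k + 1).choose (m + 1) : K) =
      (((k + 1).choose (m + 1) / (k + 1) : ℕ) : K) * (x ^ (m + 1) * y ^ (k - m)) *
        ((k + 1 : ℕ) : K) := by
    intro m hm
    rw [Finset.mem_range] at hm
    rw [Nat.cast_div (hp.dvd_choose_self m.succ_ne_zero (by omega)) hp0]
    field_simp
  rw [Finset.sum_congr rfl h]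
  ring

variable {v : K → ℤ}

lemma IsDiscVal.valGe_wittD (hv : IsDiscVal v) (hp : p.Prime) {x y : K} {s t : ℤ} (hst : t ≤ s)
    (hx : ValGe v (-s) x) (hy : ValGe v (-t) y) :
    ValGe v (-(((p : ℤ) - 1) * s + t)) (wittD p x y) := by
  rw [wittD_eq_sum hp]
  refine hv.valGe_neg (hv.valGe_sum fun m hm => ?_)
  rw [Finset.mem_range] at hm
  refine (hv.valGe_mul (hv.valGe_natCast _)
    (hv.valGe_mul (hv.valGe_pow hx (m + 1)) (hv.valGe_pow hy (p - 1 - m)))).mono ?_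
  have hcast : ((p - 1 - m : ℕ) : ℤ) = p - 1 - m := by omega
  rw [hcast]
  push_cast
  have : (0 : ℤ) ≤ p - 2 - m := by omega
  nlinarith [mul_nonneg this (sub_nonneg.2 hst)]

lemma IsDiscVal.valGe_wittD_sub (hv : IsDiscVal v) (hp : p.Prime) {x x' y : K} {r s t : ℤ}
    (hst : s ≤ t) (hx : ValGe v (-s) x) (hx' : ValGe v (-s) x') (hxx' : ValGe v r (x - x'))
    (hy : ValGe v (-t) y) :
    ValGe v (r - ((p : ℤ) - 1) * t) (wittD p x y - wittD p x' y) := by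
  rw [wittD_eq_sum hp, wittD_eq_sum hp, neg_sub_neg,
    ← Finset.sum_sub_distrib]
  refine hv.valGe_sum fun m hm => ?_
  rw [Finset.mem_range] at hm
  rw [← mul_sub, ← sub_mul, ← neg_sub (x ^ (m + 1)), neg_mul]
  refine (hv.valGe_mul (hv.valGe_natCast _) (hv.valGe_neg
    (hv.valGe_mul (hv.valGe_pow_sub_pow hx hx' hxx' (m + 1))
      (hv.valGe_pow hy (p - 1 - m))))).mono ?_
  have hcast : ((p - 1 - m : ℕ) : ℤ) = p - 1 - m := by omega
  rw [hcast]
  push_cast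
  nlinarith [mul_nonneg (Int.natCast_nonneg m) (sub_nonneg.2 hst)]

lemma IsDiscVal.valGe_wittD_one_pow_sub (hv : IsDiscVal v) (hp : p.Prime) {x : K} {s : ℤ}
    (hs : 0 ≤ s) (hx : ValGe v (-s) x) :
    ValGe v (v (p : K) - p * ((p : ℤ) - 1) * s) (wittD p x 1 ^ p - wittD p (x ^ p) 1) := by
  set f : ℤ[X] := -∑ m ∈ Finset.range (p - 1), ((p.choose (m + 1) / p : ℕ) : ℤ[X]) * X ^ (m + 1)
    with hf
  have hfx : ∀ y : K, wittD p y 1 = aeval y f := fun y => by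
    rw [wittD_eq_sum hp, hf]
    simp only [one_pow, mul_one, _root_.map_neg, _root_.map_sum, _root_.map_mul, map_natCast,
      _root_.map_pow, aeval_X]
  have hdeg : f.natDegree ≤ p - 1 := by
    rw [hf, natDegree_neg]
    refine natDegree_sum_le_of_forall_le _ _ fun m hm => ?_
    rw [Finset.mem_range] at hm
    rw [← C_eq_natCast]
    exact (natDegree_C_mul_X_pow_le _ _).trans (by omega)
  rw [hfx, hfx]
  refine (hv.valGe_aeval_pow_sub hp hs hx f hdeg).mono (le_of_eq ?_)
  have := hp.pos
  push_cast [Nat.cast_sub this]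
  ring

lemma sum_wittD_one (hp : p.Prime) (x : K) :
    ∑ k ∈ Finset.range p, wittD p (x + k) 1 = 1 + wittD p x p - p ^ (p - 1) := by
  have hp0 : (p : K) ≠ 0 := Nat.cast_ne_zero.2 hp.ne_zero
  have h : ∀ n : ℕ, ∑ k ∈ Finset.range n, wittD p (x + k) 1 = (x ^ p + n - (x + n) ^ p) / p := by
    intro n
    induction n with
    | zero => simp
    | succ n ih =>
      rw [Finset.sum_range_succ, ih, wittD]
      push_cast
      ring
  rw [h, add_pow_eq_sub_wittD hp]
  have : (p : K) ^ p = p ^ (p - 1) * p := by rw [← pow_succ, Nat.sub_add_cancel hp.pos]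
  rw [this]
  field_simp
  ring

/-- The equation reads `z ^ p = a + (z + p D(y, z))`, and the bracket is negligible. -/
lemma IsDiscVal.map_of_artinSchreier_sub (hv : IsDiscVal v) (hp : p.Prime) {y z a : K} {r s : ℤ}
    (hr : 0 ≤ r) (hs : 0 < s) (hrp : p * r < v (p : K)) (hy : ValGe v (-(s + r)) y)
    (h : artinSchreier p (y + z) - artinSchreier p y = a) (ha : a ≠ 0) (hva : v a = -(p * s)) :
    z ≠ 0 ∧ v z = -s := by
  have hp2 : (2 : ℤ) ≤ p := mod_cast hp.two_le
  have heq : z ^ p = a + (z + p * wittD p y z) := by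
    rw [← h, artinSchreier, artinSchreier, add_pow_eq_sub_wittD hp]
    ring
  have hrest : ∀ t, s ≤ t → ValGe v (-t) z → ValGe v (-(p * t) + 1) (z + p * wittD p y z) := by
    intro t hst hz
    have hD := hv.valGe_wittD hp (show t ≤ t + r by omega) (hy.mono (by omega)) hz
    exact hv.valGe_add (hz.mono (by nlinarith))
      ((hv.valGe_mul (Or.inr le_rfl) hD).mono (by nlinarith))
  have hlow : ValGe v (-s) z → z ≠ 0 ∧ v z = -s := fun hz => by
    obtain ⟨hne, hval⟩ := hv.map_add_of_valGe ha ((hrest s le_rfl hz).mono (by omega))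
    rw [← heq] at hne hval
    have hz0 : z ≠ 0 := fun h0 => hne (by rw [h0, zero_pow hp.ne_zero])
    rw [hv.map_pow hz0, hva] at hval
    exact ⟨hz0, by nlinarith⟩
  by_contra hcon
  have hz : ¬ ValGe v (-s) z := fun hz => hcon (hlow hz)
  have hz0 : z ≠ 0 := fun h0 => hz (Or.inl h0)
  have hzs : v z < -s := not_le.1 fun hle => hz (Or.inr hle)
  have hza : z ^ p - (z + p * wittD p y z) = a := by rw [heq, add_sub_cancel_right]
  obtain ⟨-, hval⟩ := hv.map_sub_of_valGe (pow_ne_zero p hz0)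
    ((hrest (-v z) (by omega) (Or.inr (by omega))).mono (by rw [hv.map_pow hz0]; linarith))
  rw [hza, hv.map_pow hz0, hva] at hval
  nlinarith

lemma IsDiscVal.valGe_of_artinSchreier_sub (hv : IsDiscVal v) (hp : p.Prime) {y z : K} {r s : ℤ}
    (hs : 0 ≤ s) (hsp : (p - 1) * s < v (p : K)) (hy : ValGe v (-s) y) (hz : ValGe v 1 z)
    (h : ValGe v r (artinSchreier p (y + z) - artinSchreier p y)) : ValGe v r z := by
  have hp2 : (2 : ℤ) ≤ p := mod_cast hp.two_le
  rcases eq_or_ne z 0 with rfl | hz0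
  · exact ValGe.zero
  have hz1 := hz.le hz0
  have hD := hv.valGe_wittD hp (show -v z ≤ s by omega) hy (Or.inr (neg_neg (v z)).le)
  have hrest : ValGe v (v z + 1) (z ^ p - p * wittD p y z) :=
    hv.valGe_sub ((hv.valGe_pow (Or.inr le_rfl) p).mono (by nlinarith))
      ((hv.valGe_mul (Or.inr le_rfl) hD).mono (by linarith))
  have heq : z - (z ^ p - p * wittD p y z) =
      -(artinSchreier p (y + z) - artinSchreier p y) := by
    rw [artinSchreier, artinSchreier, add_pow_eq_sub_wittD hp]
    ring
  obtain ⟨hne, hval⟩ := hv.map_sub_of_valGe hz0 hrest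
  rw [heq] at hne hval
  exact Or.inr (hval ▸ (hv.valGe_neg h).le hne)

end WittAddition

section TotallyRamified

variable {F L : Type*} [Field F] [Field L] [Algebra F L]

/-- `L / F` is a totally ramified extension of degree `n`, with `v` and `w` the normalized
valuations of `F` and `L`. -/
structure TotallyRamified (v : F → ℤ) (w : L → ℤ) (n : ℕ) : Prop where
  base : IsDiscVal v
  top : IsDiscVal w
  map_algebraMap : ∀ x : F, x ≠ 0 → w (algebraMap F L x) = n * v x
  finrank_eq : Module.finrank F L = n
  pos : 0 < n

/-- The nonzero members of the family `e` have valuations pairwise incongruent modulo `n`. -/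
def IncongruentVal {ι : Type*} (w : L → ℤ) (n : ℕ) (e : ι → L) : Prop :=
  ∀ i j, e i ≠ 0 → e j ≠ 0 → (n : ℤ) ∣ w (e i) - w (e j) → i = j

variable {ι : Type*} {v : F → ℤ} {w w' : L → ℤ} {n : ℕ}

namespace TotallyRamified

lemma map_smul (h : TotallyRamified v w n) {c : F} (hc : c ≠ 0) {x : L} (hx : x ≠ 0) :
    w (c • x) = n * v c + w x := by
  rw [Algebra.smul_def, h.top.map_mul _ _ (by simpa using hc) hx, h.map_algebraMap c hc]

lemma valGe_smul (h : TotallyRamified v w n) {c : F} {r s : ℤ} (hc : ValGe v s c) {x : L}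
    (hx : ValGe w r x) : ValGe w (n * s + r) (c • x) := by
  rcases eq_or_ne c 0 with rfl | hc0
  · exact Or.inl (zero_smul F x)
  rw [Algebra.smul_def]
  refine h.top.valGe_mul (Or.inr ?_) hx
  rw [h.map_algebraMap c hc0]
  exact mul_le_mul_of_nonneg_left (hc.le hc0) (Int.natCast_nonneg n)

lemma incongruentVal_smul (h : TotallyRamified v w n) {e : ι → L} (he : IncongruentVal w n e)
    (c : ι → F) : IncongruentVal w n fun i => c i • e i := by
  intro i j hi hj hdvd
  obtain ⟨hci, hei⟩ := smul_ne_zero_iff.1 hi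
  obtain ⟨hcj, hej⟩ := smul_ne_zero_iff.1 hj
  rw [h.map_smul hci hei, h.map_smul hcj hej, add_sub_add_comm, ← mul_sub] at hdvd
  exact he i j hei hej ((Int.dvd_add_right (dvd_mul_right _ _)).1 hdvd)

lemma map_natCast [CharZero F] (h : TotallyRamified v w n) {k : ℕ} (hk : k ≠ 0) :
    w (k : L) = n * v (k : F) := by
  rw [← _root_.map_natCast (algebraMap F L), h.map_algebraMap _ (Nat.cast_ne_zero.2 hk)]

lemma valGe_of_valGe_sum_smul (h : TotallyRamified v w n) {e : ι → L}
    (he : IncongruentVal w n e) {s : Finset ι} {c : ι → F} {r : ℤ}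
    (hs : ValGe w r (∑ i ∈ s, c i • e i)) : ∀ i ∈ s, ValGe w r (c i • e i) := by
  refine h.top.valGe_of_valGe_sum (fun i _ j _ hi hj hij => ?_) hs
  exact h.incongruentVal_smul he c i j hi hj (by rw [hij, sub_self]; exact dvd_zero _)

lemma linearIndependent (h : TotallyRamified v w n) {e : ι → L}
    (he : IncongruentVal w n e) (he0 : ∀ i, e i ≠ 0) : LinearIndependent F e := by
  rw [linearIndependent_iff']
  intro s c hc i hi
  by_contra hci
  have hne : c i • e i ≠ 0 := smul_ne_zero hci (he0 i)
  have hlt := h.valGe_of_valGe_sum_smul he (r := w (c i • e i) + 1) (Or.inl hc) i hi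
  exact (hlt.le hne).not_gt (lt_add_one _)

/-- A family of `n` nonzero elements of incongruent valuations is a basis. -/
noncomputable def basis [Fintype ι] (h : TotallyRamified v w n) (e : ι → L)
    (he : IncongruentVal w n e) (he0 : ∀ i, e i ≠ 0) (hcard : Fintype.card ι = n) :
    Module.Basis ι F L :=
  haveI : Nonempty ι := Fintype.card_pos_iff.1 (hcard ▸ h.pos)
  basisOfLinearIndependentOfCardEqFinrank (h.linearIndependent he he0)
    (hcard.trans h.finrank_eq.symm)

@[simp]
lemma coe_basis [Fintype ι] (h : TotallyRamified v w n) (e : ι → L)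
    (he : IncongruentVal w n e) (he0 : ∀ i, e i ≠ 0) (hcard : Fintype.card ι = n) :
    ⇑(h.basis e he he0 hcard) = e :=
  haveI : Nonempty ι := Fintype.card_pos_iff.1 (hcard ▸ h.pos)
  coe_basisOfLinearIndependentOfCardEqFinrank _ _

lemma exists_incongruentVal_basis (h : TotallyRamified v w n) :
    ∃ B : Module.Basis (Fin n) F L, IncongruentVal w n B := by
  obtain ⟨t, ht0, ht⟩ := h.top.exists_uniformizer
  have hw : ∀ i : Fin n, w (t ^ (i : ℕ)) = (i : ℕ) := fun i => by
    rw [h.top.map_pow ht0, ht, mul_one]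
  have he : IncongruentVal w n fun i : Fin n => t ^ (i : ℕ) := by
    intro i j _ _ hij
    rw [hw, hw] at hij
    have := Int.eq_zero_of_abs_lt_dvd hij (abs_sub_lt_iff.2 ⟨by omega, by omega⟩)
    exact Fin.ext (by omega)
  exact ⟨h.basis _ he (fun i => pow_ne_zero _ ht0) (Fintype.card_fin n), by simpa using he⟩

lemma valGe_apply_of_basis [Finite ι] (h : TotallyRamified v w n) (h' : TotallyRamified v w' n)
    (B : Module.Basis ι F L) (hB : IncongruentVal w n B) {A : Module.End F L} {r : ℤ}
    (hA : ∀ i, ValGe w' (w (B i) + r) (A (B i))) {x : L} {s : ℤ} (hx : ValGe w s x) :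
    ValGe w' (s + r) (A x) := by
  cases nonempty_fintype ι
  rw [← B.sum_repr x] at hx ⊢
  simp only [_root_.map_sum, _root_.map_smul]
  refine h'.top.valGe_sum fun i _ => ?_
  rcases eq_or_ne (B.repr x i) 0 with h0 | h0
  · exact Or.inl (by rw [h0, zero_smul])
  have hi := (h.valGe_of_valGe_sum_smul hB hx i (Finset.mem_univ i)).le
    (smul_ne_zero h0 (B.ne_zero i))
  rw [h.map_smul h0 (B.ne_zero i)] at hi
  exact (h'.valGe_smul (Or.inr le_rfl) (hA i)).mono (by linarith)

/-- On a basis, hence everywhere, `w' ≥ w + C` for some constant `C`; for high powers of `y` this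
forces `w' y ≥ w y`. -/
lemma le_of_totallyRamified (h : TotallyRamified v w n) (h' : TotallyRamified v w' n) {y : L}
    (hy : y ≠ 0) : w y ≤ w' y := by
  obtain ⟨B, hB⟩ := h.exists_incongruentVal_basis
  obtain ⟨C, hC⟩ := (Set.finite_range fun i => w' (B i) - w (B i)).bddBelow
  have hbound : ∀ z : L, z ≠ 0 → w z + C ≤ w' z := fun z hz =>
    (h.valGe_apply_of_basis h' B hB (A := 1) (r := C)
      (fun i => Or.inr (le_sub_iff_add_le'.1 (hC (Set.mem_range_self i)))) (Or.inr le_rfl)).le hz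
  by_contra! hlt
  have hpow := hbound (y ^ (C.natAbs + 1)) (pow_ne_zero _ hy)
  rw [h.top.map_pow hy, h'.top.map_pow hy] at hpow
  push_cast at hpow
  nlinarith [neg_abs_le C, abs_nonneg C]

lemma eq_of_totallyRamified (h : TotallyRamified v w n) (h' : TotallyRamified v w' n) {y : L}
    (hy : y ≠ 0) : w' y = w y :=
  le_antisymm (h'.le_of_totallyRamified h hy) (h.le_of_totallyRamified h' hy)

lemma comp_algEquiv (h : TotallyRamified v w n) (σ : L ≃ₐ[F] L) :
    TotallyRamified v (fun x => w (σ x)) n where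
  base := h.base
  map_algebraMap x hx := by rw [σ.commutes, h.map_algebraMap x hx]
  finrank_eq := h.finrank_eq
  pos := h.pos
  top :=
    { map_one := by rw [_root_.map_one, h.top.map_one]
      map_mul x y hx hy := by
        rw [_root_.map_mul, h.top.map_mul _ _ (by simpa using hx) (by simpa using hy)]
      min_le_add x y hx hy hxy := by
        rw [map_add]
        exact h.top.min_le_add _ _ (by simpa using hx) (by simpa using hy)
          (by rwa [← map_add, map_ne_zero])
      exists_uniformizer := by
        obtain ⟨t, ht0, ht⟩ := h.top.exists_uniformizer
        exact ⟨σ.symm t, by simpa using ht0, by simpa using ht⟩ }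

lemma map_algEquiv (h : TotallyRamified v w n) (σ : L ≃ₐ[F] L) (x : L) : w (σ x) = w x := by
  rcases eq_or_ne x 0 with rfl | hx
  · rw [map_zero]
  · exact h.eq_of_totallyRamified (h.comp_algEquiv σ) hx

lemma valGe_algEquiv (h : TotallyRamified v w n) (σ : L ≃ₐ[F] L) {x : L} {r : ℤ}
    (hx : ValGe w r x) : ValGe w r (σ x) :=
  hx.imp (fun h0 => by rw [h0, map_zero]) fun hr => by rwa [h.map_algEquiv]

lemma exists_eq_smul_add [Finite ι] (h : TotallyRamified v w n) (B : Module.Basis ι F L)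
    (hB : IncongruentVal w n B) {x : L} (hx : x ≠ 0) {k : ι} (hk : (n : ℤ) ∣ w x - w (B k)) :
    ∃ (c : F) (y : L), x = c • B k + y ∧ c ≠ 0 ∧ w (c • B k) = w x ∧ ValGe w (w x + 1) y := by
  classical
  cases nonempty_fintype ι
  set y := ∑ i ∈ Finset.univ.erase k, B.repr x i • B i with hy
  have hsum : x = B.repr x k • B k + y := by
    rw [hy, Finset.add_sum_erase _ (fun i => B.repr x i • B i) (Finset.mem_univ k), B.sum_repr]
  have hterm := h.valGe_of_valGe_sum_smul hB (s := Finset.univ) (c := B.repr x) (r := w x)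
    (by rw [B.sum_repr]; exact Or.inr le_rfl)
  have hyval : ValGe w (w x + 1) y := by
    refine h.top.valGe_sum fun i hi => or_iff_not_imp_left.2 fun hne => ?_
    refine lt_of_le_of_ne ((hterm i (Finset.mem_univ i)).le hne) fun heq => ?_
    rw [h.map_smul (left_ne_zero_of_smul hne) (B.ne_zero i)] at heq
    refine (Finset.mem_erase.1 hi).1 (hB i k (B.ne_zero i) (B.ne_zero k) ?_)
    rw [heq, add_sub_assoc] at hk
    exact (Int.dvd_add_right (dvd_mul_right _ _)).1 hk
  obtain ⟨hne, hval⟩ := h.top.map_sub_of_valGe hx hyval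
  rw [show x - y = B.repr x k • B k by rw [sub_eq_iff_eq_add, ← hsum]] at hne hval
  exact ⟨B.repr x k, y, hsum, left_ne_zero_of_smul hne, hval, hyval⟩

end TotallyRamified

/-- The linear operator `A` raises valuations by at least `r`. -/
def Raises (w : L → ℤ) (A : Module.End F L) (r : ℤ) : Prop :=
  ∀ x s, ValGe w s x → ValGe w (s + r) (A x)

/-- Only the leading term `c • B k` of `x` matters. -/
lemma TotallyRamified.map_apply_of_dvd [Finite ι] (h : TotallyRamified v w n)
    (B : Module.Basis ι F L) (hB : IncongruentVal w n B) {A : Module.End F L} {r : ℤ}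
    (hA : Raises w A r) {k : ι} (hAk : A (B k) ≠ 0) (hwk : w (A (B k)) = w (B k) + r) {x : L}
    (hx : x ≠ 0) (hk : (n : ℤ) ∣ w x - w (B k)) : A x ≠ 0 ∧ w (A x) = w x + r := by
  obtain ⟨c, y, hsum, hc, hval, hy⟩ := h.exists_eq_smul_add B hB hx hk
  have hlead : w (c • A (B k)) = w x + r := by
    rw [h.map_smul hc hAk, hwk, ← hval, h.map_smul hc (B.ne_zero k), add_assoc]
  have hAx : A x = c • A (B k) + A y := by rw [hsum, map_add, _root_.map_smul]
  rw [hAx, ← hlead]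
  exact h.top.map_add_of_valGe (smul_ne_zero hc hAk) ((hA y _ hy).mono (by omega))

namespace Raises

variable {A B A' B' : Module.End F L} {r s : ℤ}

lemma mono (h : Raises w A s) (hrs : r ≤ s) : Raises w A r :=
  fun x t hx => (h x t hx).mono (by omega)

lemma zero : Raises w (0 : Module.End F L) r := fun _ _ _ => ValGe.zero

lemma one : Raises w (1 : Module.End F L) 0 := fun x s hx => by simpa using hx

lemma neg (hw : IsDiscVal w) (h : Raises w A r) : Raises w (-A) r :=
  fun x t hx => hw.valGe_neg (h x t hx)

lemma add (hw : IsDiscVal w) (h : Raises w A r) (h' : Raises w B r) : Raises w (A + B) r :=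
  fun x t hx => hw.valGe_add (h x t hx) (h' x t hx)

lemma of_sub (hw : IsDiscVal w) (h : Raises w (A - B) r) (h' : Raises w B r) : Raises w A r := by
  simpa using h.add hw h'

lemma sub (hw : IsDiscVal w) (h : Raises w A r) (h' : Raises w B r) : Raises w (A - B) r :=
  fun x t hx => hw.valGe_sub (h x t hx) (h' x t hx)

lemma sum (hw : IsDiscVal w) {s : Finset ι} {f : ι → Module.End F L}
    (h : ∀ i ∈ s, Raises w (f i) r) : Raises w (∑ i ∈ s, f i) r := fun x t hx => by
  rw [LinearMap.sum_apply]
  exact hw.valGe_sum fun i hi => h i hi x t hx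

lemma mul (h : Raises w A r) (h' : Raises w B s) : Raises w (A * B) (r + s) :=
  fun x t hx => (h _ _ (h' x t hx)).mono (by omega)

lemma pow (h : Raises w A r) (n : ℕ) : Raises w (A ^ n) (n * r) := by
  induction n with
  | zero => simpa using one
  | succ n ih =>
    rw [pow_succ]
    exact (ih.mul h).mono (by push_cast; linarith)

lemma smul (ht : TotallyRamified v w n) {c : F} (hc : ValGe v s c) (h : Raises w A r) :
    Raises w (c • A) (n * s + r) :=
  fun x t hx => (ht.valGe_smul hc (h x t hx)).mono (by omega)

lemma natCast_mul (hw : IsDiscVal w) {k : ℕ} {t : ℤ} (hk : ValGe w t (k : L))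
    (h : Raises w A r) : Raises w ((k : Module.End F L) * A) (t + r) := fun x u hx => by
  rw [Module.End.mul_apply, Module.End.natCast_apply, nsmul_eq_mul]
  exact (hw.valGe_mul hk (h x u hx)).mono (by omega)

lemma mul_sub_mul (hw : IsDiscVal w) {t t' u : ℤ} (hAB : Raises w (A - B) t) (hB : Raises w B r)
    (hA' : Raises w A' s) (hAB' : Raises w (A' - B') t') (hu : u ≤ t + s) (hu' : u ≤ r + t') :
    Raises w (A * A' - B * B') u := by
  have h : A * A' - B * B' = (A - B) * A' + B * (A' - B') := by
    rw [sub_mul, mul_sub]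
    abel
  rw [h]
  exact ((hAB.mul hA').mono hu).add hw ((hB.mul hAB').mono hu')

lemma pow_sub_pow (hw : IsDiscVal w) {t : ℤ} (hA : Raises w A r) (hB : Raises w B r)
    (hAB : Raises w (A - B) (r + t)) (k : ℕ) : Raises w (A ^ k - B ^ k) (k * r + t) := by
  induction k with
  | zero => simpa using zero
  | succ k ih =>
    rw [pow_succ, pow_succ]
    exact mul_sub_mul hw ih (hB.pow k) hA hAB (by push_cast; linarith) (by push_cast; linarith)

lemma of_basis [Finite ι] (ht : TotallyRamified v w n) (E : Module.Basis ι F L)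
    (hE : IncongruentVal w n E) (h : ∀ i, ValGe w (w (E i) + r) (A (E i))) : Raises w A r :=
  fun _ _ hx => ht.valGe_apply_of_basis ht E hE h hx

/-- The mixed terms of the binomial expansion are divisible by `p`. -/
lemma one_add_pow_sub (hw : IsDiscVal w) {p : ℕ} (hp : p.Prime) (hr : 0 ≤ r)
    (h : Raises w A r) : Raises w ((1 + A) ^ p - 1 - A ^ p) (w (p : L) + r) := by
  obtain ⟨k, rfl⟩ : ∃ k, p = k + 1 := ⟨p - 1, by have := hp.pos; omega⟩
  rw [add_comm, (Commute.one_right A).add_pow, Finset.sum_range_succ, Finset.sum_range_succ']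
  simp only [one_pow, mul_one, pow_zero, Nat.choose_zero_right, Nat.choose_self, Nat.cast_one]
  rw [add_sub_right_comm, add_sub_cancel_right, add_sub_cancel_right]
  refine sum hw fun i hi => ?_
  rw [Finset.mem_range] at hi
  obtain ⟨c, hc⟩ := hp.dvd_choose_self i.succ_ne_zero (by omega)
  rw [hc, ← Nat.cast_comm]
  refine natCast_mul hw ?_ ((h.pow (i + 1)).mono (by push_cast; nlinarith))
  rw [Nat.cast_mul]
  exact (hw.valGe_mul (Or.inr le_rfl) (hw.valGe_natCast c)).mono (by omega)

end Raises

end TotallyRamified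

section Scaffold

variable {F L : Type*} [Field F] [Field L] [Algebra F L]

/-- A scaffold on a totally ramified extension of degree `n`: operators `Ψ a` carrying `ρ` to
elements of prescribed valuations `𝔟 a`, incongruent modulo `n`, on which they multiply like
`Ψ j * Ψ a = Ψ (j + a)`, up to an error of precision `𝔟 j + 𝔟 a`. -/
structure Scaffold (v : F → ℤ) (w : L → ℤ) (n : ℕ) (𝔟 : ℕ → ℤ) (Ψ : ℕ → Module.End F L) (ρ : L) :
    Prop extends TotallyRamified v w n where
  le_zero : (n : ℤ) ≤ 𝔟 0
  eq_of_dvd : ∀ a < n, ∀ a' < n, (n : ℤ) ∣ 𝔟 a - 𝔟 a' → a = a'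
  apply_ne_zero : ∀ a < n, Ψ a ρ ≠ 0
  map_apply : ∀ a < n, w (Ψ a ρ) = 𝔟 a
  apply_eq_zero : ∀ a, n ≤ a → Ψ a ρ = 0
  congr : ∀ j < n, ∀ a < n, ValGe w (𝔟 j + 𝔟 a) (Ψ j (Ψ a ρ) - Ψ (j + a) ρ)

/-- The exponents of the basis attached to a scaffold: `d a = ⌊𝔟 a / n⌋`, and `ω j` is the
least increment of `d` over a step of length `j`. -/
structure ScaffoldExponents (n : ℕ) (𝔟 d ω : ℕ → ℤ) : Prop where
  eq_ediv : ∀ a < n, d a = 𝔟 a / n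
  isLeast : ∀ j < n, IsLeast {x | ∃ a, a < n - j ∧ x = d (j + a) - d a} (ω j)

namespace ScaffoldExponents

variable {n : ℕ} {𝔟 d ω : ℕ → ℤ}

lemma le_sub (E : ScaffoldExponents n 𝔟 d ω) {j a : ℕ} (h : j + a < n) :
    ω j ≤ d (j + a) - d a :=
  (E.isLeast j (by omega)).2 ⟨a, by omega, rfl⟩

lemma exists_eq_sub (E : ScaffoldExponents n 𝔟 d ω) {j : ℕ} (hj : j < n) :
    ∃ a, j + a < n ∧ ω j = d (j + a) - d a := by
  obtain ⟨a, ha, h⟩ := (E.isLeast j hj).1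
  exact ⟨a, by omega, h⟩

lemma mul_add_emod (E : ScaffoldExponents n 𝔟 d ω) {a : ℕ} (ha : a < n) :
    n * d a + 𝔟 a % n = 𝔟 a := by
  rw [E.eq_ediv a ha, Int.mul_ediv_add_emod]

end ScaffoldExponents

namespace Scaffold

variable {v : F → ℤ} {w : L → ℤ} {n : ℕ} {𝔟 d ω : ℕ → ℤ} {Ψ : ℕ → Module.End F L} {ρ : L}
  {π : F}

lemma incongruentVal_apply (S : Scaffold v w n 𝔟 Ψ ρ) : IncongruentVal w n fun a => Ψ a ρ := by
  have hlt : ∀ a, Ψ a ρ ≠ 0 → a < n := fun a ha => not_le.1 fun hle => ha (S.apply_eq_zero a hle)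
  intro a a' ha ha' hdvd
  rw [S.map_apply a (hlt a ha), S.map_apply a' (hlt a' ha')] at hdvd
  exact S.eq_of_dvd a (hlt a ha) a' (hlt a' ha') hdvd

lemma map_zpow_smul_apply (S : Scaffold v w n 𝔟 Ψ ρ) (hπ0 : π ≠ 0) (hπ : v π = 1) {a : ℕ}
    (ha : a < n) (k : ℤ) : w (π ^ k • Ψ a ρ) = n * k + 𝔟 a := by
  rw [S.map_smul (zpow_ne_zero _ hπ0) (S.apply_ne_zero a ha), S.base.map_zpow hπ0, hπ, mul_one,
    S.map_apply a ha]

lemma valGe_coeff_of_valGe (S : Scaffold v w n 𝔟 Ψ ρ) (E : ScaffoldExponents n 𝔟 d ω)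
    (hπ0 : π ≠ 0) (hπ : v π = 1) {a : ℕ} (ha : a < n) {c : F} {r : ℤ}
    (h : ValGe w (n * r) (c • π ^ (-d a) • Ψ a ρ)) : ValGe v r c := by
  refine or_iff_not_imp_left.2 fun hc => ?_
  have hne : π ^ (-d a) • Ψ a ρ ≠ 0 := smul_ne_zero (zpow_ne_zero _ hπ0) (S.apply_ne_zero a ha)
  have hle := h.le (smul_ne_zero hc hne)
  rw [S.map_smul hc hne, S.map_zpow_smul_apply hπ0 hπ ha] at hle
  have hlt := Int.emod_lt_of_pos (𝔟 a) (Nat.cast_pos.2 S.pos)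
  have hd := E.mul_add_emod ha
  have : n * r < n * (v c + 1) := by linarith
  exact Int.lt_add_one_iff.1 (lt_of_mul_lt_mul_left this (Int.natCast_nonneg n))

lemma valGe_zpow_smul_apply (S : Scaffold v w n 𝔟 Ψ ρ) (E : ScaffoldExponents n 𝔟 d ω)
    (hπ0 : π ≠ 0) (hπ : v π = 1) {a : ℕ} (ha : a < n) {k : ℤ} (hk : -d a ≤ k) :
    ValGe w 0 (π ^ k • Ψ a ρ) := by
  refine Or.inr ?_
  rw [S.map_zpow_smul_apply hπ0 hπ ha]
  have := Int.emod_nonneg (𝔟 a) (Nat.cast_pos (α := ℤ).2 S.pos).ne'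
  nlinarith [E.mul_add_emod ha, Int.natCast_nonneg n]

lemma valGe_smul_apply_sub (S : Scaffold v w n 𝔟 Ψ ρ) (E : ScaffoldExponents n 𝔟 d ω)
    (hπ0 : π ≠ 0) (hπ : v π = 1) {j a : ℕ} (hj : j < n) (ha : a < n) :
    ValGe w n ((π ^ (-ω j) • Ψ j) (π ^ (-d a) • Ψ a ρ) - π ^ (-ω j - d a) • Ψ (j + a) ρ) := by
  have heq : (π ^ (-ω j) • Ψ j) (π ^ (-d a) • Ψ a ρ) - π ^ (-ω j - d a) • Ψ (j + a) ρ =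
      π ^ (-ω j - d a) • (Ψ j (Ψ a ρ) - Ψ (j + a) ρ) := by
    rw [LinearMap.smul_apply, _root_.map_smul, smul_smul, ← zpow_add₀ hπ0, ← sub_eq_add_neg,
      smul_sub]
  have hπpow : ValGe v (-ω j - d a) (π ^ (-ω j - d a)) :=
    Or.inr (by rw [S.base.map_zpow hπ0, hπ, mul_one])
  have hn := S.pos
  have hd0 : 1 ≤ d 0 := by
    rw [E.eq_ediv 0 hn, Int.le_ediv_iff_mul_le (Nat.cast_pos.2 hn), one_mul]
    exact S.le_zero
  have hω : ω j ≤ d j - d 0 := E.le_sub (a := 0) hj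
  have hnz : (n : ℤ) ≠ 0 := Nat.cast_ne_zero.2 hn.ne'
  have hbj := Int.emod_nonneg (𝔟 j) hnz
  have hba := Int.emod_nonneg (𝔟 a) hnz
  rw [heq]
  refine (S.valGe_smul hπpow (S.congr j hj a ha)).mono ?_
  nlinarith [E.mul_add_emod hj, E.mul_add_emod ha, Int.natCast_nonneg n]

lemma exists_basis (S : Scaffold v w n 𝔟 Ψ ρ) (hπ0 : π ≠ 0) (d : ℕ → ℤ) :
    ∃ B : Module.Basis (Fin n) F L,
      (∀ a, B a = π ^ (-d a) • Ψ a ρ) ∧ IncongruentVal w n B := by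
  have hinc : IncongruentVal w n fun a : Fin n => π ^ (-d a) • Ψ a ρ :=
    S.incongruentVal_smul (e := fun a : Fin n => Ψ a ρ)
      (fun a a' ha ha' h => Fin.ext (S.incongruentVal_apply a a' ha ha' h)) _
  have hne : ∀ a : Fin n, π ^ (-d a) • Ψ a ρ ≠ 0 := fun a =>
    smul_ne_zero (zpow_ne_zero _ hπ0) (S.apply_ne_zero a a.2)
  exact ⟨S.basis _ hinc hne (Fintype.card_fin n), fun a => by rw [S.coe_basis],
    by rwa [S.coe_basis]⟩

/-- The elements `π ^ (-d a) • Ψ a ρ` have valuations in `[0, n)`, hence form a basis of the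
valuation ring of `L`, and `π ^ (-ω j) • Ψ j` maps this basis to integral elements. -/
lemma valGe_smul_apply (S : Scaffold v w n 𝔟 Ψ ρ) (E : ScaffoldExponents n 𝔟 d ω)
    (hπ0 : π ≠ 0) (hπ : v π = 1) {j : ℕ} (hj : j < n) {z : L} (hz : ValGe w 0 z) :
    ValGe w 0 ((π ^ (-ω j) • Ψ j) z) := by
  obtain ⟨B, hB, hinc⟩ := S.exists_basis hπ0 d
  have hBj : ∀ a, ValGe w 0 ((π ^ (-ω j) • Ψ j) (B a)) := fun a => by
    have herr := (S.valGe_smul_apply_sub E hπ0 hπ hj a.2).mono (Int.natCast_nonneg n)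
    rw [hB, ← sub_add_cancel ((π ^ (-ω j) • Ψ j) _) (π ^ (-ω j - d a) • Ψ (j + a) ρ)]
    refine S.top.valGe_add herr ?_
    rcases lt_or_ge (j + a) n with hja | hja
    · exact S.valGe_zpow_smul_apply E hπ0 hπ hja (by linarith [E.le_sub hja])
    · exact Or.inl (by rw [S.apply_eq_zero _ hja, smul_zero])
  rw [← B.sum_repr z] at hz ⊢
  simp only [map_sum, _root_.map_smul]
  refine S.top.valGe_sum fun a _ => ?_
  have hterm := S.valGe_of_valGe_sum_smul hinc hz a (Finset.mem_univ a)
  rw [hB] at hterm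
  have hcoeff : ValGe v 0 (B.repr z a) :=
    S.valGe_coeff_of_valGe E hπ0 hπ a.2 (by rwa [mul_zero])
  exact (S.valGe_smul hcoeff (hBj a)).mono (by simp)

/-- Evaluate at `π ^ (-d a) • Ψ a ρ`, where `a` realizes the minimum defining `ω j`: up to the
error term, the summands have incongruent valuations, so each of them is integral. -/
lemma valGe_coeff_add_one (S : Scaffold v w n 𝔟 Ψ ρ) (E : ScaffoldExponents n 𝔟 d ω)
    (hπ0 : π ≠ 0) (hπ : v π = 1) {c : Fin n → F} {r : ℤ} (hr : r < 0)
    (hc : ∀ i, ValGe v r (c i))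
    (h : ∀ z, ValGe w 0 z → ValGe w 0 ((∑ i, c i • (π ^ (-ω i) • Ψ i)) z)) (j : Fin n) :
    ValGe v (r + 1) (c j) := by
  obtain ⟨a, hja, hω⟩ := E.exists_eq_sub j.2
  have ha : a < n := by omega
  have : (0 : ℤ) < n := Nat.cast_pos.2 S.pos
  have hsum := h _ (S.valGe_zpow_smul_apply E hπ0 hπ ha le_rfl)
  have herr : ValGe w (n * (r + 1)) (∑ i, c i • ((π ^ (-ω i) • Ψ i) (π ^ (-d a) • Ψ a ρ) -
      π ^ (-ω i - d a) • Ψ (i + a) ρ)) :=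
    S.top.valGe_sum fun i _ => (S.valGe_smul (hc i)
      (S.valGe_smul_apply_sub E hπ0 hπ i.2 ha)).mono (by linarith)
  have hmain : ValGe w (n * (r + 1)) (∑ i, c i • π ^ (-ω i - d a) • Ψ (i + a) ρ) := by
    have hdiff := S.top.valGe_sub (hsum.mono (by nlinarith)) herr
    rwa [LinearMap.sum_apply, ← Finset.sum_sub_distrib, Finset.sum_congr rfl fun i _ => by
      rw [LinearMap.smul_apply, ← smul_sub, sub_sub_cancel]] at hdiff
  have hinc : IncongruentVal w n fun i : Fin n => π ^ (-ω i - d a) • Ψ (i + a) ρ :=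
    S.incongruentVal_smul (e := fun i : Fin n => Ψ (i + a) ρ) (fun i i' hi hi' hdvd =>
      Fin.ext (Nat.add_right_cancel (S.incongruentVal_apply _ _ hi hi' hdvd))) _
  have hterm := S.valGe_of_valGe_sum_smul hinc hmain j (Finset.mem_univ j)
  rw [show -ω j - d a = -d (j + a) by rw [hω]; ring] at hterm
  exact S.valGe_coeff_of_valGe E hπ0 hπ hja hterm

lemma valGe_coeff (S : Scaffold v w n 𝔟 Ψ ρ) (E : ScaffoldExponents n 𝔟 d ω)
    (hπ0 : π ≠ 0) (hπ : v π = 1) {c : Fin n → F}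
    (h : ∀ z, ValGe w 0 z → ValGe w 0 ((∑ i, c i • (π ^ (-ω i) • Ψ i)) z)) (j : Fin n) :
    ValGe v 0 (c j) := by
  have hdescent : ∀ k : ℕ, (∀ i, ValGe v (-k) (c i)) → ∀ i, ValGe v 0 (c i) := by
    intro k
    induction k with
    | zero => simp
    | succ k ih =>
      exact fun hk => ih fun i =>
        (S.valGe_coeff_add_one E hπ0 hπ (by omega) hk h i).mono (by push_cast; linarith)
  obtain ⟨C, hC⟩ := (Set.finite_range fun i => v (c i)).bddBelow
  refine hdescent C.natAbs (fun i => Or.inr ?_) j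
  have hCi : C ≤ v (c i) := hC (Set.mem_range_self i)
  omega

lemma linearIndependent_smul (S : Scaffold v w n 𝔟 Ψ ρ) (E : ScaffoldExponents n 𝔟 d ω)
    (hπ0 : π ≠ 0) (hπ : v π = 1) :
    LinearIndependent F fun j : Fin n => π ^ (-ω j) • Ψ j := by
  rw [Fintype.linearIndependent_iff]
  intro c hc i
  by_contra hci
  have hscaled : ∑ j, (π ^ (-(v (c i) + 1)) * c j) • (π ^ (-ω j) • Ψ j) = 0 := by
    simp only [mul_smul]
    rw [← Finset.smul_sum, hc, smul_zero]
  have hint := S.valGe_coeff E hπ0 hπ (c := fun j => π ^ (-(v (c i) + 1)) * c j)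
    (fun z _ => by rw [hscaled]; exact ValGe.zero) i
  have hle := hint.le (mul_ne_zero (zpow_ne_zero _ hπ0) hci)
  rw [S.base.map_mul _ _ (zpow_ne_zero _ hπ0) hci, S.base.map_zpow hπ0, hπ] at hle
  omega

theorem mem_and_forall_valGe_iff (S : Scaffold v w n 𝔟 Ψ ρ) (E : ScaffoldExponents n 𝔟 d ω)
    (hπ0 : π ≠ 0) (hπ : v π = 1) {A : Submodule F (Module.End F L)}
    (hA : Module.finrank F A ≤ n) (hΨ : ∀ j < n, Ψ j ∈ A) (α : Module.End F L) :
    (α ∈ A ∧ ∀ z, ValGe w 0 z → ValGe w 0 (α z)) ↔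
      ∃ c : Fin n → F, (∀ i, ValGe v 0 (c i)) ∧ α = ∑ j, c j • (π ^ (-ω j) • Ψ j) := by
  have hmem : ∀ j : Fin n, π ^ (-ω j) • Ψ j ∈ A := fun j => A.smul_mem _ (hΨ j j.2)
  constructor
  · rintro ⟨hα, hint⟩
    have : FiniteDimensional F L := Module.finite_of_finrank_pos (S.finrank_eq ▸ S.pos)
    have hspan : Submodule.span F (Set.range fun j : Fin n => π ^ (-ω j) • Ψ j) = A :=
      Submodule.eq_of_le_of_finrank_le (Submodule.span_le.2 (Set.range_subset_iff.2 hmem)) (by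
        rwa [finrank_span_eq_card (S.linearIndependent_smul E hπ0 hπ), Fintype.card_fin])
    rw [← hspan, Submodule.mem_span_range_iff_exists_fun] at hα
    obtain ⟨c, rfl⟩ := hα
    exact ⟨c, S.valGe_coeff E hπ0 hπ hint, rfl⟩
  · rintro ⟨c, hc, rfl⟩
    refine ⟨A.sum_mem fun j _ => A.smul_mem _ (hmem j), fun z hz => ?_⟩
    rw [LinearMap.sum_apply]
    refine S.top.valGe_sum fun j _ => ?_
    exact (S.valGe_smul (hc j) (S.valGe_smul_apply E hπ0 hπ j.2 hz)).mono (by simp)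

end Scaffold

end Scaffold

section GeneratorPair

variable {F L : Type*} [Field F] [Field L] [Algebra F L]
  {p : ℕ} {v : F → ℤ} {w : L → ℤ} {b₁ b₂ : ℤ} {X Y : L}

/-- A totally ramified extension of degree `p ^ 2` with elements `X`, `Y` of valuations
`-p * b₁` and `-b₂`, where `b₁ ≡ b₂ mod p ^ 2` are prime to `p`, as are the ramification numbers
of a cyclic extension. -/
structure GeneratorPair (p : ℕ) (v : F → ℤ) (w : L → ℤ) (b₁ b₂ : ℤ) (X Y : L) : Prop
    extends TotallyRamified v w (p ^ 2) where
  prime : p.Prime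
  one_le_map_prime_base : 1 ≤ v (p : F)
  b₁_pos : 0 < b₁
  b₁_lt_b₂ : b₁ < b₂
  not_dvd : ¬ (p : ℤ) ∣ b₁
  dvd_sub : (p : ℤ) ^ 2 ∣ b₂ - b₁
  X_ne_zero : X ≠ 0
  map_X : w X = -(p * b₁)
  Y_ne_zero : Y ≠ 0
  map_Y : w Y = -b₂

/-- The product `(Y choose i) * (X choose j)`; for `i, j < p` these are the basis elements on
which the operators of the scaffold act by lowering the indices. -/
noncomputable def chooseMul [CharZero L] (X Y : L) (i j : ℕ) : L :=
  Ring.choose Y i * Ring.choose X j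

namespace GeneratorPair

lemma two_le (G : GeneratorPair p v w b₁ b₂ X Y) : (2 : ℤ) ≤ p := by
  exact_mod_cast G.prime.two_le

lemma mul_pos (G : GeneratorPair p v w b₁ b₂ X Y) : 0 < p * b₁ :=
  _root_.mul_pos (by linarith [G.two_le]) G.b₁_pos

lemma b₂_pos (G : GeneratorPair p v w b₁ b₂ X Y) : 0 < b₂ :=
  G.b₁_pos.trans G.b₁_lt_b₂

lemma valGe_X (G : GeneratorPair p v w b₁ b₂ X Y) : ValGe w (-(p * b₁)) X := Or.inr G.map_X.ge

lemma valGe_Y (G : GeneratorPair p v w b₁ b₂ X Y) : ValGe w (-b₂) Y := Or.inr G.map_Y.ge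

lemma eq_of_sq_dvd (G : GeneratorPair p v w b₁ b₂ X Y) {i j i' j' : ℕ} (hi : i < p) (hj : j < p)
    (hi' : i' < p) (hj' : j' < p)
    (h : (p : ℤ) ^ 2 ∣ (i * b₂ + j * (p * b₁)) - (i' * b₂ + j' * (p * b₁))) :
    i = i' ∧ j = j' := by
  have hp : Prime (p : ℤ) := Nat.prime_iff_prime_int.1 G.prime
  have hdvd : (p : ℤ) ^ 2 ∣ b₁ * ((i - i') + p * (j - j')) := by
    obtain ⟨c, hc⟩ := G.dvd_sub
    obtain ⟨d, hd⟩ := h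
    exact ⟨d - c * (i - i'), by linear_combination hd - ((i : ℤ) - i') * hc⟩
  replace hdvd := (((Prime.coprime_iff_not_dvd hp).2 G.not_dvd).pow_left).dvd_of_dvd_mul_left hdvd
  have eq_of_dvd : ∀ {k l : ℕ}, k < p → l < p → (p : ℤ) ∣ k - l → k = l := by
    intro k l hk hl hkl
    have := Int.eq_zero_of_abs_lt_dvd hkl (abs_sub_lt_iff.2 ⟨by omega, by omega⟩)
    omega
  have hii' : i = i' := eq_of_dvd hi hi'
    ((dvd_add_left (dvd_mul_right _ _)).1 ((dvd_pow_self _ two_ne_zero).trans hdvd))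
  rw [hii', sub_self, zero_add, sq] at hdvd
  exact ⟨hii', eq_of_dvd hj hj' (Int.dvd_of_mul_dvd_mul_left hp.ne_zero hdvd)⟩

variable [CharZero F]

lemma map_prime (G : GeneratorPair p v w b₁ b₂ X Y) : w (p : L) = (p : ℤ) ^ 2 * v (p : F) := by
  rw [G.map_natCast G.prime.ne_zero, Nat.cast_pow]

lemma one_le_map_prime (G : GeneratorPair p v w b₁ b₂ X Y) : 1 ≤ w (p : L) := by
  rw [G.map_prime]
  nlinarith [G.two_le, G.one_le_map_prime_base]

variable [CharZero L]

lemma map_chooseMul (G : GeneratorPair p v w b₁ b₂ X Y) {i j : ℕ} (hi : i < p) (hj : j < p) :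
    chooseMul X Y i j ≠ 0 ∧ w (chooseMul X Y i j) = -(i * b₂ + j * (p * b₁)) := by
  obtain ⟨hY0, hY⟩ := G.top.map_choose G.prime G.one_le_map_prime G.Y_ne_zero
    (by rw [G.map_Y]; linarith [G.b₂_pos]) hi
  obtain ⟨hX0, hX⟩ := G.top.map_choose G.prime G.one_le_map_prime G.X_ne_zero
    (by rw [G.map_X]; linarith [G.mul_pos]) hj
  refine ⟨mul_ne_zero hY0 hX0, ?_⟩
  rw [chooseMul, G.top.map_mul _ _ hY0 hX0, hY, hX, G.map_X, G.map_Y]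
  ring

lemma incongruentVal (G : GeneratorPair p v w b₁ b₂ X Y) :
    IncongruentVal w (p ^ 2) fun ij : Fin p × Fin p => chooseMul X Y ij.1 ij.2 := by
  intro ij kl _ _ h
  rw [(G.map_chooseMul ij.1.2 ij.2.2).2, (G.map_chooseMul kl.1.2 kl.2.2).2, neg_sub_neg,
    Nat.cast_pow] at h
  obtain ⟨h₁, h₂⟩ := G.eq_of_sq_dvd kl.1.2 kl.2.2 ij.1.2 ij.2.2 h
  exact Prod.ext (Fin.ext h₁.symm) (Fin.ext h₂.symm)

/-- The basis `(Y choose i) * (X choose j)`, `i, j < p`. -/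
noncomputable def basis (G : GeneratorPair p v w b₁ b₂ X Y) : Module.Basis (Fin p × Fin p) F L :=
  G.toTotallyRamified.basis _ G.incongruentVal (fun ij => (G.map_chooseMul ij.1.2 ij.2.2).1)
    (by rw [Fintype.card_prod, Fintype.card_fin, sq])

lemma basis_apply (G : GeneratorPair p v w b₁ b₂ X Y) (ij : Fin p × Fin p) :
    G.basis ij = chooseMul X Y ij.1 ij.2 := by
  rw [basis, TotallyRamified.coe_basis]

lemma incongruentVal_basis (G : GeneratorPair p v w b₁ b₂ X Y) :
    IncongruentVal w (p ^ 2) G.basis := by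
  simpa only [IncongruentVal, basis_apply] using G.incongruentVal

lemma raises_of_chooseMul (G : GeneratorPair p v w b₁ b₂ X Y) {A : Module.End F L} {r : ℤ}
    (h : ∀ i < p, ∀ j < p, ValGe w (-(i * b₂ + j * (p * b₁)) + r) (A (chooseMul X Y i j))) :
    Raises w A r := by
  refine Raises.of_basis G.toTotallyRamified G.basis G.incongruentVal_basis fun ij => ?_
  rw [basis_apply, (G.map_chooseMul ij.1.2 ij.2.2).2]
  exact h _ ij.1.2 _ ij.2.2

lemma linearMap_ext (G : GeneratorPair p v w b₁ b₂ X Y) {A B : Module.End F L}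
    (h : ∀ i < p, ∀ j < p, A (chooseMul X Y i j) = B (chooseMul X Y i j)) : A = B :=
  G.basis.ext fun ij => by simpa only [basis_apply] using h _ ij.1.2 _ ij.2.2

/-- The operator lowering the index of the binomial coefficient of `Y` by `k` and that of the
binomial coefficient of `X` by `l`. -/
noncomputable def lower (G : GeneratorPair p v w b₁ b₂ X Y) (k l : ℕ) : Module.End F L :=
  G.basis.constr F fun ij =>
    if k ≤ ij.1 ∧ l ≤ ij.2 then chooseMul X Y (ij.1 - k) (ij.2 - l) else 0

lemma lower_apply (G : GeneratorPair p v w b₁ b₂ X Y) {i j : ℕ} (hi : i < p) (hj : j < p)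
    (k l : ℕ) : G.lower k l (chooseMul X Y i j) =
      if k ≤ i ∧ l ≤ j then chooseMul X Y (i - k) (j - l) else 0 := by
  rw [← G.basis_apply (⟨i, hi⟩, ⟨j, hj⟩), lower, Module.Basis.constr_basis]

lemma lower_zero_zero (G : GeneratorPair p v w b₁ b₂ X Y) : G.lower 0 0 = 1 :=
  G.linearMap_ext fun i hi j hj => by simp [G.lower_apply hi hj]

lemma lower_mul_lower (G : GeneratorPair p v w b₁ b₂ X Y) (k l k' l' : ℕ) :
    G.lower k l * G.lower k' l' = G.lower (k + k') (l + l') := by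
  refine G.linearMap_ext fun i hi j hj => ?_
  rw [Module.End.mul_apply, G.lower_apply hi hj, G.lower_apply hi hj]
  split_ifs with h₁ h₂ h₂
  · rw [G.lower_apply (by omega) (by omega), if_pos (by omega), Nat.sub_sub, Nat.sub_sub,
      add_comm k', add_comm l']
  · rw [G.lower_apply (by omega) (by omega), if_neg (by omega)]
  · omega
  · exact map_zero _

lemma lower_pow (G : GeneratorPair p v w b₁ b₂ X Y) (k l n : ℕ) :
    G.lower k l ^ n = G.lower (n * k) (n * l) := by
  induction n with
  | zero => simp [lower_zero_zero]
  | succ n ih => rw [pow_succ, ih, lower_mul_lower, Nat.succ_mul, Nat.succ_mul]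

lemma raises_lower (G : GeneratorPair p v w b₁ b₂ X Y) (k l : ℕ) :
    Raises w (G.lower k l) (k * b₂ + l * (p * b₁)) := by
  refine G.raises_of_chooseMul fun i hi j hj => ?_
  rw [G.lower_apply hi hj]
  split_ifs with h
  · refine Or.inr (le_of_eq ?_)
    rw [(G.map_chooseMul (by omega) (by omega)).2, Nat.cast_sub h.1, Nat.cast_sub h.2]
    ring
  · exact ValGe.zero

/-- The leading term of `ρ` is a multiple of the basis element with both indices equal to
`p - 1`. -/
lemma map_apply_of_raises_sub_lower (G : GeneratorPair p v w b₁ b₂ X Y) {A : Module.End F L}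
    {s t : ℕ} (hs : s < p) (ht : t < p)
    (hA : Raises w (A - G.lower t s) (t * b₂ + s * (p * b₁) + 1)) {ρ : L} (hρ0 : ρ ≠ 0)
    (hρ : w ρ = b₂) : A ρ ≠ 0 ∧ w (A ρ) = w ρ + (t * b₂ + s * (p * b₁)) := by
  have hp := G.prime.pos
  have hpred : ((p - 1 : ℕ) : ℤ) = p - 1 := Nat.cast_pred hp
  have hcast : ∀ n < p, ((p - 1 - n : ℕ) : ℤ) = (p - 1 : ℕ) - n := by omega
  have hraises : Raises w A (t * b₂ + s * (p * b₁)) :=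
    (hA.mono (by omega)).of_sub G.top (G.raises_lower t s)
  obtain ⟨-, hk⟩ := G.map_chooseMul (i := p - 1) (j := p - 1) (by omega) (by omega)
  obtain ⟨hl0, hl⟩ := G.map_chooseMul (i := p - 1 - t) (j := p - 1 - s) (by omega) (by omega)
  have hAk : A (chooseMul X Y (p - 1) (p - 1)) = chooseMul X Y (p - 1 - t) (p - 1 - s) +
      (A - G.lower t s) (chooseMul X Y (p - 1) (p - 1)) := by
    rw [LinearMap.sub_apply, G.lower_apply (by omega) (by omega), if_pos (by omega),
      add_sub_cancel]
  have hlk : w (chooseMul X Y (p - 1 - t) (p - 1 - s)) =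
      w (chooseMul X Y (p - 1) (p - 1)) + (t * b₂ + s * (p * b₁)) := by
    rw [hk, hl, hcast t ht, hcast s hs]
    ring
  obtain ⟨hAk0, hAkv⟩ := G.top.map_add_of_valGe hl0
    ((hA (chooseMul X Y (p - 1) (p - 1)) _ (Or.inr le_rfl)).mono (by rw [hlk, add_assoc]))
  rw [← hAk] at hAk0 hAkv
  refine G.map_apply_of_dvd G.basis G.incongruentVal_basis hraises
    (k := (⟨p - 1, by omega⟩, ⟨p - 1, by omega⟩)) ?_ ?_ hρ0 ?_
  · rwa [basis_apply]
  · rw [basis_apply, hAkv, hlk]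
  · obtain ⟨d, hd⟩ := G.dvd_sub
    rw [basis_apply, hk, hρ, Nat.cast_pow, hpred]
    exact ⟨p * d + b₁, by linear_combination (p : ℤ) * hd⟩

lemma raises_pow_mul_pow_sub_lower (G : GeneratorPair p v w b₁ b₂ X Y) {Ψ₁ Ψ₂ : Module.End F L}
    (h₁ : Raises w (Ψ₁ - G.lower 0 1) (p * b₁ + 1)) (h₂ : Raises w (Ψ₂ - G.lower 1 0) (b₂ + 1))
    (s t : ℕ) : Raises w (Ψ₂ ^ t * Ψ₁ ^ s - G.lower t s) (t * b₂ + s * (p * b₁) + 1) := by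
  have hl₁ : Raises w (G.lower 0 1) (p * b₁) := by simpa using G.raises_lower 0 1
  have hl₂ : Raises w (G.lower 1 0) b₂ := by simpa using G.raises_lower 1 0
  have hΨ₁ : Raises w Ψ₁ (p * b₁) := (h₁.mono (by omega)).of_sub G.top hl₁
  have hΨ₂ : Raises w Ψ₂ b₂ := (h₂.mono (by omega)).of_sub G.top hl₂
  have hlower : G.lower t s = G.lower 1 0 ^ t * G.lower 0 1 ^ s := by
    simp [lower_pow, lower_mul_lower]
  rw [hlower]
  exact Raises.mul_sub_mul G.top (Raises.pow_sub_pow G.top hΨ₂ hl₂ h₂ t) (hl₂.pow t) (hΨ₁.pow s)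
    (Raises.pow_sub_pow G.top hΨ₁ hl₁ h₁ s) (by linarith) (by linarith)

end GeneratorPair

end GeneratorPair

section NearShift

variable {F L : Type*} [Field F] [Field L] [Algebra F L]
  {p : ℕ} {v : F → ℤ} {w : L → ℤ} {b₁ b₂ m : ℤ} {X Y : L} {σ : L ≃ₐ[F] L} {μ : F}

/-- The operator `Ψ₂ = σ ^ p - 1`. -/
noncomputable def psi₂ (p : ℕ) (σ : L ≃ₐ[F] L) : Module.End F L :=
  (σ.toLinearMap : Module.End F L) ^ p - 1

lemma psi₂_eq (p : ℕ) (σ : L ≃ₐ[F] L) : psi₂ p σ = (σ ^ p).toLinearMap - 1 := by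
  rw [AlgEquiv.pow_toLinearMap]
  rfl

lemma commute_psi₂ (p : ℕ) (σ : L ≃ₐ[F] L) :
    Commute (σ.toLinearMap : Module.End F L) (psi₂ p σ) :=
  ((Commute.refl _).pow_right p).sub_right (Commute.one_right _)

/-- An automorphism of order dividing `p ^ 2` which, up to small errors, moves `X` to `X + 1` and
`Y` to `Y - μ`, while its `p`-th power fixes `X` and moves `Y` to `Y + 1`. -/
structure NearShift (p : ℕ) (v : F → ℤ) (w : L → ℤ) (b₁ b₂ m : ℤ) (X Y : L) (σ : L ≃ₐ[F] L)
    (μ : F) : Prop extends GeneratorPair p v w b₁ b₂ X Y where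
  eq_add : b₂ = (p : ℤ) ^ 2 * m + b₁
  valGe_μ : ValGe v (-m) μ
  valGe_map_X_sub : ValGe w 1 (σ X - (X + 1))
  valGe_map_Y_sub : ValGe w (-b₂ + p * b₁ + 1) (σ Y + algebraMap F L μ - Y)
  pow_map_X : (σ ^ p) X = X
  valGe_pow_map_Y_sub : ValGe w (p * b₁) ((σ ^ p) Y - (Y + 1))
  pow_sq : σ ^ p ^ 2 = 1
  sq_mul_lt : (p : ℤ) ^ 2 * b₁ < b₂
  lt_map_prime : (p + 1) * b₂ - (p - 1) * b₁ < w (p : L)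

lemma NearShift.m_pos (N : NearShift p v w b₁ b₂ m X Y σ μ) : 0 < m :=
  pos_of_mul_pos_right (by linarith [N.eq_add, N.b₁_lt_b₂] : 0 < (p : ℤ) ^ 2 * m) (sq_nonneg _)

lemma NearShift.mul_b₂_lt_map_prime (N : NearShift p v w b₁ b₂ m X Y σ μ) :
    p * b₂ < w (p : L) := by
  have hle : ((p : ℤ) - 1) * b₁ ≤ (p : ℤ) ^ 2 * b₁ :=
    mul_le_mul_of_nonneg_right (by nlinarith [N.two_le]) N.b₁_pos.le
  linarith [N.lt_map_prime, N.sq_mul_lt]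

lemma NearShift.raises_algEquiv (N : NearShift p v w b₁ b₂ m X Y σ μ) :
    Raises w (σ.toLinearMap : Module.End F L) 0 := fun x s hx => by
  rw [add_zero]
  exact N.valGe_algEquiv σ hx

variable [CharZero F]

/-- The truncated binomial series `A ^ [μ] = ∑ k < p, (μ choose k) • (A - 1) ^ k`, as a function
of `A - 1`. -/
noncomputable def truncatedPow (p : ℕ) (μ : F) (A : Module.End F L) : Module.End F L :=
  ∑ k ∈ Finset.range p, Ring.choose μ k • A ^ k

/-- The operator `Ψ₁ = σ * (σ ^ p) ^ [μ] - 1`. -/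
noncomputable def psi₁ (p : ℕ) (σ : L ≃ₐ[F] L) (μ : F) : Module.End F L :=
  (σ.toLinearMap : Module.End F L) * truncatedPow p μ (psi₂ p σ) - 1

lemma commute_truncatedPow {A B : Module.End F L} (h : Commute A B) (p : ℕ) (μ : F) :
    Commute A (truncatedPow p μ B) :=
  Commute.sum_right _ _ _ fun k _ => (h.pow_right k).smul_right _

lemma truncatedPow_eq_one_add {p : ℕ} (hp : 0 < p) (μ : F) (A : Module.End F L) :
    truncatedPow p μ A = 1 + A * ∑ k ∈ Finset.range (p - 1), Ring.choose μ (k + 1) • A ^ k := by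
  obtain ⟨n, rfl⟩ : ∃ n, p = n + 1 := ⟨p - 1, by omega⟩
  rw [truncatedPow, Finset.sum_range_succ', add_comm, Nat.add_sub_cancel, Finset.mul_sum]
  simp [pow_succ']

lemma commute_psi₂_psi₁ (p : ℕ) (σ : L ≃ₐ[F] L) (μ : F) : Commute (psi₂ p σ) (psi₁ p σ μ) :=
  ((commute_psi₂ p σ).symm.mul_right (commute_truncatedPow (Commute.refl _) p μ)).sub_right
    (Commute.one_right _)

lemma one_add_psi₁_pow (p : ℕ) (σ : L ≃ₐ[F] L) (μ : F) :
    (1 + psi₁ p σ μ) ^ p = (1 + psi₂ p σ) * truncatedPow p μ (psi₂ p σ) ^ p := by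
  rw [psi₁, add_sub_cancel, (commute_truncatedPow (commute_psi₂ p σ) p μ).mul_pow, psi₂,
    add_sub_cancel]

lemma NearShift.valGe_choose_μ (N : NearShift p v w b₁ b₂ m X Y σ μ) {k : ℕ} (hk : k < p) :
    ValGe v (-(k * m)) (Ring.choose μ k) :=
  N.base.valGe_choose N.prime N.one_le_map_prime_base N.m_pos.le N.valGe_μ hk

lemma psi_pow_mul_psi_pow (p : ℕ) (σ : L ≃ₐ[F] L) (μ : F) (t s t' s' : ℕ) :
    psi₂ p σ ^ t * psi₁ p σ μ ^ s * (psi₂ p σ ^ t' * psi₁ p σ μ ^ s') =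
      psi₂ p σ ^ (t + t') * psi₁ p σ μ ^ (s + s') := by
  have h := (commute_psi₂_psi₁ p σ μ).pow_pow t' s
  rw [pow_add, pow_add, mul_assoc, ← mul_assoc (psi₁ p σ μ ^ s), ← h.eq]
  simp only [mul_assoc]

lemma ring_choose_add_one {K : Type*} [Field K] [CharZero K] (x : K) (n : ℕ) :
    Ring.choose (x + 1) n = Ring.choose x n + if n = 0 then 0 else Ring.choose x (n - 1) := by
  rcases n with _ | n
  · simp
  · rw [Ring.choose_succ_succ, if_neg n.succ_ne_zero, add_comm, Nat.add_sub_cancel]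

variable [CharZero L]

/-- By Vandermonde's identity; the truncation is harmless because `i < p`. -/
lemma GeneratorPair.truncatedPow_lower_apply (G : GeneratorPair p v w b₁ b₂ X Y) (μ : F) {i j : ℕ}
    (hi : i < p) (hj : j < p) : truncatedPow p μ (G.lower 1 0) (chooseMul X Y i j) =
      chooseMul X (Y + algebraMap F L μ) i j := by
  rw [chooseMul.eq_def X (Y + _), add_comm Y, Ring.add_choose_eq i (Commute.all _ _),
    Finset.Nat.sum_antidiagonal_eq_sum_range_succ
      (fun k l => Ring.choose (algebraMap F L μ) k * Ring.choose Y l), Finset.sum_mul,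
    truncatedPow, LinearMap.sum_apply]
  symm
  refine Finset.sum_subset_zero_on_sdiff (Finset.range_mono hi) (fun k hk => ?_) fun k hk => ?_
  · rw [Finset.mem_sdiff, Finset.mem_range, Finset.mem_range] at hk
    rw [LinearMap.smul_apply, lower_pow, G.lower_apply hi hj, if_neg (by omega), smul_zero]
  · rw [Finset.mem_range] at hk
    rw [LinearMap.smul_apply, lower_pow, G.lower_apply hi hj, if_pos (by omega), mul_one,
      mul_zero, Nat.sub_zero, chooseMul, Algebra.smul_def, Ring.map_choose, mul_assoc]

namespace NearShift

lemma raises_psi₂_sub_lower (N : NearShift p v w b₁ b₂ m X Y σ μ) :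
    Raises w (psi₂ p σ - N.lower 1 0) (b₂ + p * b₁) := by
  have hb₂ := N.b₂_pos
  refine N.raises_of_chooseMul fun i hi j hj => ?_
  have happly : (psi₂ p σ - N.lower 1 0) (chooseMul X Y i j) =
      (Ring.choose ((σ ^ p) Y) i - Ring.choose (Y + 1) i) * Ring.choose X j := by
    rw [LinearMap.sub_apply, N.lower_apply hi hj, psi₂_eq, LinearMap.sub_apply,
      AlgEquiv.toLinearMap_apply, chooseMul, chooseMul, map_mul, Ring.map_choose, Ring.map_choose,
      N.pow_map_X, ring_choose_add_one, Module.End.one_apply]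
    simp only [Nat.sub_zero]
    split_ifs <;> first | omega | ring
  have hY1 : ValGe w (-b₂) (Y + 1) :=
    N.top.valGe_add N.valGe_Y (N.top.valGe_one.mono (by omega))
  rw [happly]
  refine (N.top.valGe_mul
    (N.top.valGe_choose_sub N.prime N.one_le_map_prime hb₂.le (N.valGe_algEquiv (σ ^ p) N.valGe_Y)
      hY1 N.valGe_pow_map_Y_sub hi)
    (N.top.valGe_choose N.prime N.one_le_map_prime N.mul_pos.le N.valGe_X hj)).mono (le_of_eq ?_)
  ring

lemma raises_psi₂ (N : NearShift p v w b₁ b₂ m X Y σ μ) : Raises w (psi₂ p σ) b₂ :=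
  (N.raises_psi₂_sub_lower.mono (by linarith [N.mul_pos])).of_sub N.top
    (by simpa using N.raises_lower 1 0)

lemma raises_truncatedPow_psi₂_sub_lower (N : NearShift p v w b₁ b₂ m X Y σ μ) :
    Raises w (truncatedPow p μ (psi₂ p σ) - truncatedPow p μ (N.lower 1 0)) (p * b₁ + 1) := by
  have hlower : Raises w (N.lower 1 0) b₂ := by simpa using N.raises_lower 1 0
  rw [truncatedPow, truncatedPow, ← Finset.sum_sub_distrib]
  refine Raises.sum N.top fun k hk => ?_
  have hsub : Ring.choose μ k • psi₂ p σ ^ k - Ring.choose μ k • N.lower 1 0 ^ k =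
    Ring.choose μ k • (psi₂ p σ ^ k - N.lower 1 0 ^ k) := (smul_sub _ _ _).symm
  rw [hsub]
  rcases k.eq_zero_or_pos with rfl | hk0
  · simpa using Raises.zero
  refine (Raises.smul N.toTotallyRamified (N.valGe_choose_μ (Finset.mem_range.1 hk))
    (Raises.pow_sub_pow N.top N.raises_psi₂ hlower N.raises_psi₂_sub_lower k)).mono ?_
  have : (1 : ℤ) ≤ k := by exact_mod_cast hk0
  rw [Nat.cast_pow, N.eq_add]
  nlinarith [N.b₁_pos]

lemma raises_truncatedPow_lower_sub (N : NearShift p v w b₁ b₂ m X Y σ μ) :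
    Raises w (σ.toLinearMap * truncatedPow p μ (N.lower 1 0) - 1 - N.lower 0 1) (p * b₁ + 1) := by
  have hp := N.one_le_map_prime
  have hb₂ := N.b₂_pos
  have hpb₁ := N.mul_pos
  refine N.raises_of_chooseMul fun i hi j hj => ?_
  have happly : (σ.toLinearMap * truncatedPow p μ (N.lower 1 0) - 1 - N.lower 0 1)
      (chooseMul X Y i j) =
      (Ring.choose (σ Y + algebraMap F L μ) i - Ring.choose Y i) * Ring.choose (σ X) j +
        Ring.choose Y i * (Ring.choose (σ X) j - Ring.choose (X + 1) j) := by
    rw [LinearMap.sub_apply, LinearMap.sub_apply, N.lower_apply hi hj, Module.End.mul_apply,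
      N.truncatedPow_lower_apply μ hi hj, AlgEquiv.toLinearMap_apply, chooseMul, chooseMul,
      chooseMul, map_mul, Ring.map_choose, Ring.map_choose, map_add, AlgEquiv.commutes,
      ring_choose_add_one, Module.End.one_apply]
    simp only [Nat.sub_zero]
    split_ifs <;> first | omega | ring
  have hX1 : ValGe w (-(p * b₁)) (X + 1) :=
    N.top.valGe_add N.valGe_X (N.top.valGe_one.mono (by omega))
  have hσX := N.valGe_algEquiv σ N.valGe_X
  have hσY : ValGe w (-b₂) (σ Y + algebraMap F L μ) := by
    simpa using N.top.valGe_add (N.valGe_map_Y_sub.mono (by omega : -b₂ ≤ _)) N.valGe_Y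
  have hdiffY := N.top.valGe_choose_sub N.prime hp hb₂.le hσY N.valGe_Y N.valGe_map_Y_sub hi
  have hdiffX := N.top.valGe_choose_sub N.prime hp hpb₁.le hσX hX1 N.valGe_map_X_sub hj
  have hchooseY := N.top.valGe_choose N.prime hp hb₂.le N.valGe_Y hi
  have hchooseX := N.top.valGe_choose N.prime hp hpb₁.le hσX hj
  rw [happly]
  exact N.top.valGe_add ((N.top.valGe_mul hdiffY hchooseX).mono (by linarith))
    ((N.top.valGe_mul hchooseY hdiffX).mono (by linarith))

lemma raises_psi₁_sub_lower (N : NearShift p v w b₁ b₂ m X Y σ μ) :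
    Raises w (psi₁ p σ μ - N.lower 0 1) (p * b₁ + 1) := by
  have hsplit : psi₁ p σ μ - N.lower 0 1 =
      (σ.toLinearMap * truncatedPow p μ (N.lower 1 0) - 1 - N.lower 0 1) +
        σ.toLinearMap * (truncatedPow p μ (psi₂ p σ) - truncatedPow p μ (N.lower 1 0)) := by
    rw [psi₁, mul_sub]
    abel
  rw [hsplit]
  exact N.raises_truncatedPow_lower_sub.add N.top
    ((N.raises_algEquiv.mul N.raises_truncatedPow_psi₂_sub_lower).mono (by linarith))

lemma raises_psi₁ (N : NearShift p v w b₁ b₂ m X Y σ μ) : Raises w (psi₁ p σ μ) (p * b₁) :=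
  (N.raises_psi₁_sub_lower.mono (by omega)).of_sub N.top (by simpa using N.raises_lower 0 1)

lemma raises_psi₂_pow (N : NearShift p v w b₁ b₂ m X Y σ μ) :
    Raises w (psi₂ p σ ^ p) (w (p : L) + b₂) := by
  have hone : (1 + psi₂ p σ) ^ p = 1 := by
    rw [psi₂, add_sub_cancel, ← pow_mul, ← sq, ← AlgEquiv.pow_toLinearMap, N.pow_sq]
    rfl
  simpa [hone] using (Raises.one_add_pow_sub N.top N.prime N.b₂_pos.le N.raises_psi₂).neg N.top

/-- Writing the truncated power as `1 + Ψ₂ * Q`, the series `Q` lowers valuations by at most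
`p ^ 2 * m = b₂ - b₁`, while `Ψ₂ ^ p` is divisible by `p`. -/
lemma raises_truncatedPow_psi₂_pow_sub_one (N : NearShift p v w b₁ b₂ m X Y σ μ) :
    Raises w (truncatedPow p μ (psi₂ p σ) ^ p - 1) (2 * b₂) := by
  have hb₁ := N.b₁_pos
  have hM : b₂ - b₁ = (p : ℤ) ^ 2 * m := by linarith [N.eq_add]
  have hlt := N.lt_map_prime
  have hp2 := N.two_le
  set Q := ∑ k ∈ Finset.range (p - 1), Ring.choose μ (k + 1) • psi₂ p σ ^ k
  have hcomm : Commute (psi₂ p σ) Q :=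
    Commute.sum_right _ _ _ fun k _ => ((Commute.refl _).pow_right k).smul_right _
  have hraisesQ : Raises w Q (-(b₂ - b₁)) := by
    refine Raises.sum N.top fun k hk => ?_
    rw [Finset.mem_range] at hk
    refine (Raises.smul N.toTotallyRamified (N.valGe_choose_μ (k := k + 1) (by omega))
      (N.raises_psi₂.pow k)).mono ?_
    rw [hM, N.eq_add]
    push_cast
    nlinarith [Int.natCast_nonneg k]
  have hmixed := Raises.one_add_pow_sub N.top N.prime le_rfl
    ((N.raises_psi₂.mul hraisesQ).mono (by linarith))
  have hpow : Raises w ((psi₂ p σ * Q) ^ p) (2 * b₂) := by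
    rw [hcomm.mul_pow]
    exact (N.raises_psi₂_pow.mul (hraisesQ.pow p)).mono (by linarith)
  have hsum := (hmixed.mono
    (by nlinarith [N.mul_b₂_lt_map_prime, N.b₂_pos] : 2 * b₂ ≤ _)).add N.top hpow
  rwa [sub_add_cancel, ← truncatedPow_eq_one_add N.prime.pos] at hsum

lemma raises_psi₁_pow_sub_psi₂ (N : NearShift p v w b₁ b₂ m X Y σ μ) :
    Raises w (psi₁ p σ μ ^ p - psi₂ p σ) (2 * b₂) := by
  have hb₂ := N.b₂_pos
  have hsplit : psi₁ p σ μ ^ p - psi₂ p σ =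
      (1 + psi₂ p σ) * (truncatedPow p μ (psi₂ p σ) ^ p - 1) -
        ((1 + psi₁ p σ μ) ^ p - 1 - psi₁ p σ μ ^ p) := by
    rw [one_add_psi₁_pow, mul_sub, mul_one]
    abel
  have hone : Raises w (1 + psi₂ p σ) 0 := Raises.one.add N.top (N.raises_psi₂.mono hb₂.le)
  rw [hsplit]
  refine ((hone.mul N.raises_truncatedPow_psi₂_pow_sub_one).mono (by linarith)).sub N.top
    ((Raises.one_add_pow_sub N.top N.prime N.mul_pos.le N.raises_psi₁).mono ?_)
  nlinarith [N.mul_b₂_lt_map_prime, N.two_le, N.mul_pos]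

end NearShift

/-- The monomials `Ψ^(a)` in the two operators, indexed by the digits of `a` in base `p`. -/
noncomputable def psiMonomial (p : ℕ) (σ : L ≃ₐ[F] L) (μ : F) (a : ℕ) : Module.End F L :=
  if a < p ^ 2 then psi₂ p σ ^ (a / p) * psi₁ p σ μ ^ (a % p) else 0

/-- The function `𝔟`: the valuation of `Ψ^(a) ρ` if `ρ` has valuation `b₂`. -/
def level (p : ℕ) (b₁ b₂ : ℤ) (a : ℕ) : ℤ :=
  (1 + ((a / p : ℕ) : ℤ)) * b₂ + ((a % p : ℕ) : ℤ) * (p : ℤ) * b₁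

namespace NearShift

lemma raises_psi_pow_sub_psiMonomial (N : NearShift p v w b₁ b₂ m X Y σ μ) {s : ℕ} (hs : s < p)
    (t : ℕ) : Raises w (psi₂ p σ ^ t * psi₁ p σ μ ^ s - psiMonomial p σ μ (p * t + s))
      (w (p : L) + (t + 1 - p) * b₂ + s * (p * b₁)) := by
  have hdiv : (p * t + s) / p = t := by
    rw [Nat.mul_add_div N.prime.pos, Nat.div_eq_of_lt hs, add_zero]
  have hmod : (p * t + s) % p = s := by rw [Nat.mul_add_mod, Nat.mod_eq_of_lt hs]
  rcases lt_or_ge t p with ht | ht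
  · rw [psiMonomial, if_pos (by nlinarith), hdiv, hmod, sub_self]
    exact Raises.zero
  · obtain ⟨k, rfl⟩ := Nat.exists_eq_add_of_le ht
    rw [psiMonomial, if_neg (by nlinarith), sub_zero, pow_add]
    refine ((N.raises_psi₂_pow.mul (N.raises_psi₂.pow k)).mul (N.raises_psi₁.pow s)).mono ?_
    push_cast
    linarith

/-- If adding the low digits carries, replace `Ψ₁ ^ p` by `Ψ₂`. -/
lemma raises_psi_pow_sub_psiMonomial_add (N : NearShift p v w b₁ b₂ m X Y σ μ) {s : ℕ}
    (hs : s < p) (t : ℕ) :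
    Raises w (psi₂ p σ ^ t * psi₁ p σ μ ^ (p + s) - psiMonomial p σ μ (p * t + (p + s)))
      ((t + 1) * b₂ + (p + s) * (p * b₁)) := by
  have hsplit : psi₂ p σ ^ t * psi₁ p σ μ ^ (p + s) - psiMonomial p σ μ (p * t + (p + s)) =
      psi₂ p σ ^ t * (psi₁ p σ μ ^ p - psi₂ p σ) * psi₁ p σ μ ^ s +
        (psi₂ p σ ^ (t + 1) * psi₁ p σ μ ^ s - psiMonomial p σ μ (p * (t + 1) + s)) := by
    rw [pow_add (psi₁ p σ μ), pow_succ (psi₂ p σ), mul_sub, sub_mul, mul_add_one, add_assoc]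
    simp only [mul_assoc]
    abel
  rw [hsplit]
  refine Raises.add N.top ((((N.raises_psi₂.pow t).mul N.raises_psi₁_pow_sub_psi₂).mul
    (N.raises_psi₁.pow s)).mono ?_) ((N.raises_psi_pow_sub_psiMonomial hs (t + 1)).mono ?_)
  · linarith [N.sq_mul_lt]
  · push_cast
    linarith [N.sq_mul_lt, N.mul_b₂_lt_map_prime]

lemma raises_psiMonomial_mul_sub (N : NearShift p v w b₁ b₂ m X Y σ μ) {j a : ℕ}
    (hj : j < p ^ 2) (ha : a < p ^ 2) :
    Raises w (psiMonomial p σ μ j * psiMonomial p σ μ a - psiMonomial p σ μ (j + a))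
      (level p b₁ b₂ j + level p b₁ b₂ a - b₂) := by
  have hj' := Nat.mod_lt j N.prime.pos
  have ha' := Nat.mod_lt a N.prime.pos
  have hsum : j + a = p * (j / p + a / p) + (j % p + a % p) := by
    linarith [Nat.div_add_mod j p, Nat.div_add_mod a p]
  have hlevel : level p b₁ b₂ j + level p b₁ b₂ a - b₂ =
      ((j / p + a / p : ℕ) + 1) * b₂ + (j % p + a % p : ℕ) * (p * b₁) := by
    rw [level, level]
    push_cast
    ring
  rw [hlevel, hsum, psiMonomial, psiMonomial, if_pos hj, if_pos ha, psi_pow_mul_psi_pow]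
  rcases lt_or_ge (j % p + a % p) p with hlt | hge
  · refine (N.raises_psi_pow_sub_psiMonomial hlt _).mono ?_
    linarith [N.mul_b₂_lt_map_prime]
  · obtain ⟨s, hs⟩ := Nat.exists_eq_add_of_le hge
    rw [hs, Nat.cast_add p s]
    exact N.raises_psi_pow_sub_psiMonomial_add (by omega) _

lemma map_psiMonomial_apply (N : NearShift p v w b₁ b₂ m X Y σ μ) {ρ : L} (hρ0 : ρ ≠ 0)
    (hρ : w ρ = b₂) {a : ℕ} (ha : a < p ^ 2) :
    psiMonomial p σ μ a ρ ≠ 0 ∧ w (psiMonomial p σ μ a ρ) = level p b₁ b₂ a := by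
  obtain ⟨hne, hval⟩ := N.map_apply_of_raises_sub_lower (Nat.mod_lt a N.prime.pos)
    (Nat.div_lt_of_lt_mul (by rwa [← sq]))
    (N.raises_pow_mul_pow_sub_lower N.raises_psi₁_sub_lower
      (N.raises_psi₂_sub_lower.mono (by linarith [N.mul_pos])) (a % p) (a / p)) hρ0 hρ
  rw [psiMonomial, if_pos ha, level]
  exact ⟨hne, by rw [hval, hρ]; ring⟩

lemma scaffold (N : NearShift p v w b₁ b₂ m X Y σ μ) {ρ : L} (hρ0 : ρ ≠ 0) (hρ : w ρ = b₂) :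
    Scaffold v w (p ^ 2) (level p b₁ b₂) (psiMonomial p σ μ) ρ where
  toTotallyRamified := N.toTotallyRamified
  le_zero := by
    simp only [level, Nat.zero_div, Nat.zero_mod, N.eq_add]
    push_cast
    nlinarith [N.m_pos, N.b₁_pos]
  eq_of_dvd a ha a' ha' h := by
    have hp := N.prime.pos
    rw [Nat.cast_pow, level, level] at h
    rw [sq] at ha ha'
    obtain ⟨hdiv, hmod⟩ := N.eq_of_sq_dvd (Nat.div_lt_of_lt_mul ha) (Nat.mod_lt a hp)
      (Nat.div_lt_of_lt_mul ha') (Nat.mod_lt a' hp) (by convert h using 1; ring)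
    rw [← Nat.div_add_mod a p, ← Nat.div_add_mod a' p, hdiv, hmod]
  apply_ne_zero a ha := (N.map_psiMonomial_apply hρ0 hρ ha).1
  map_apply a ha := (N.map_psiMonomial_apply hρ0 hρ ha).2
  apply_eq_zero a ha := by rw [psiMonomial, if_neg (not_lt.2 ha), LinearMap.zero_apply]
  congr j hj a ha := by
    refine (N.raises_psiMonomial_mul_sub hj ha ρ b₂ (Or.inr hρ.ge)).mono ?_
    linarith

lemma exists_scaffold (N : NearShift p v w b₁ b₂ m X Y σ μ) :
    ∃ ρ, Scaffold v w (p ^ 2) (level p b₁ b₂) (psiMonomial p σ μ) ρ := by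
  obtain ⟨t, ht0, ht⟩ := N.top.exists_uniformizer
  exact ⟨t ^ b₂, N.scaffold (zpow_ne_zero _ ht0) (by rw [N.top.map_zpow ht0, ht, mul_one])⟩

end NearShift

end NearShift

section WittExtension

variable {F L : Type*} [Field F] [Field L] [Algebra F L]
  {p : ℕ} {v : F → ℤ} {w : L → ℤ} {b m : ℤ} {a μ : F} {x₁ x₂ : L} {σ : L ≃ₐ[F] L}

/-- A totally ramified extension of degree `p ^ 2` containing the solutions `x₁`, `x₂` of the
Witt vector equations attached to `a` and `μ ^ p * a`, together with an automorphism `σ` acting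
on them like the addition of the Witt vector `(1, 0)`, up to small errors. The number `b` is the
first ramification number, the second one is `p ^ 2 * m + b`. -/
structure WittExtension (p : ℕ) (v : F → ℤ) (w : L → ℤ) (b m : ℤ) (a μ : F) (x₁ x₂ : L)
    (σ : L ≃ₐ[F] L) : Prop extends TotallyRamified v w (p ^ 2) where
  prime : p.Prime
  a_ne_zero : a ≠ 0
  map_a : v a = -b
  b_pos : 0 < b
  not_dvd : ¬ (p : ℤ) ∣ b
  μ_ne_zero : μ ≠ 0
  map_μ : v μ = -m
  sq_mul_lt : (p : ℤ) ^ 2 * b < p ^ 2 * m + b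
  lt_map_prime : (p + 1) * ((p : ℤ) ^ 2 * m + b) - (p - 1) * b < w (p : L)
  artinSchreier_x₁ : artinSchreier p x₁ = algebraMap F L a
  artinSchreier_x₂ :
    artinSchreier p x₂ = algebraMap F L (μ ^ p * a) + wittD p x₁ (algebraMap F L a)
  valGe_map_x₁_sub : ValGe w (w (p : L) - p * (p - 1) * b) (σ x₁ - (x₁ + 1))
  valGe_map_x₂_sub : ValGe w 1 (σ x₂ - (x₂ + wittD p x₁ 1))
  pow_sq : σ ^ p ^ 2 = 1

lemma map_artinSchreier (τ : L ≃ₐ[F] L) (x : L) :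
    τ (artinSchreier p x) = artinSchreier p (τ x) := by
  simp only [artinSchreier, map_sub, map_pow]

lemma map_wittD (τ : L ≃ₐ[F] L) (x y : L) : τ (wittD p x y) = wittD p (τ x) (τ y) := by
  simp only [wittD, map_div₀, map_sub, map_add, map_pow, map_natCast]

lemma pow_map_sub_eq_sum (σ : L ≃ₐ[F] L) (x₁ x₂ : L) (n : ℕ) :
    (σ ^ n) x₂ - x₂ = ∑ k ∈ Finset.range n,
      (wittD p ((σ ^ k) x₁) 1 + (σ ^ k) (σ x₂ - (x₂ + wittD p x₁ 1))) := by
  induction n with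
  | zero => simp
  | succ n ih =>
    rw [Finset.sum_range_succ, ← ih, map_sub, map_add, map_wittD, map_one, pow_succ,
      AlgEquiv.mul_apply]
    ring

namespace WittExtension

lemma two_le (W : WittExtension p v w b m a μ x₁ x₂ σ) : (2 : ℤ) ≤ p := by
  exact_mod_cast W.prime.two_le

lemma m_pos (W : WittExtension p v w b m a μ x₁ x₂ σ) : 0 < m := by
  have hb : b ≤ (p : ℤ) ^ 2 * b :=
    le_mul_of_one_le_left W.b_pos.le (one_le_pow₀ (by linarith [W.two_le]))
  exact pos_of_mul_pos_right (by linarith [W.sq_mul_lt] : 0 < (p : ℤ) ^ 2 * m) (sq_nonneg _)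

lemma mul_pos (W : WittExtension p v w b m a μ x₁ x₂ σ) : 0 < p * b :=
  _root_.mul_pos (by linarith [W.two_le]) W.b_pos

lemma map_algebraMap_a (W : WittExtension p v w b m a μ x₁ x₂ σ) :
    w (algebraMap F L a) = -((p : ℤ) ^ 2 * b) := by
  rw [W.map_algebraMap _ W.a_ne_zero, W.map_a, Nat.cast_pow, mul_neg]

lemma map_algebraMap_μ (W : WittExtension p v w b m a μ x₁ x₂ σ) :
    w (algebraMap F L μ) = -((p : ℤ) ^ 2 * m) := by
  rw [W.map_algebraMap _ W.μ_ne_zero, W.map_μ, Nat.cast_pow, mul_neg]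

lemma two_mul_le (W : WittExtension p v w b m a μ x₁ x₂ σ) : 2 * b ≤ p * b :=
  mul_le_mul_of_nonneg_right W.two_le W.b_pos.le

lemma two_mul_mul_le (W : WittExtension p v w b m a μ x₁ x₂ σ) :
    2 * (p * b) ≤ (p : ℤ) ^ 2 * b := by
  rw [sq, mul_assoc]
  exact mul_le_mul_of_nonneg_right W.two_le W.mul_pos.le

lemma two_mul_sq_mul_le (W : WittExtension p v w b m a μ x₁ x₂ σ) :
    2 * ((p : ℤ) ^ 2 * b) ≤ (p : ℤ) ^ 3 * b := by
  rw [pow_succ' (p : ℤ) 2, mul_assoc]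
  exact mul_le_mul_of_nonneg_right W.two_le (by linarith [W.two_mul_mul_le, W.mul_pos])

lemma pow_three_mul_lt_map_prime (W : WittExtension p v w b m a μ x₁ x₂ σ) :
    (p : ℤ) ^ 3 * b < w (p : L) := by
  have h : 0 < ((p : ℤ) + 1) * ((p : ℤ) ^ 2 * m + b - p ^ 2 * b) :=
    _root_.mul_pos (by linarith [W.two_le]) (sub_pos.2 W.sq_mul_lt)
  linarith [W.lt_map_prime, W.two_mul_le, W.two_mul_mul_le, W.b_pos]

lemma two_mul_sq_mul_lt_map_prime (W : WittExtension p v w b m a μ x₁ x₂ σ) :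
    2 * ((p : ℤ) ^ 2 * b) < w (p : L) :=
  W.two_mul_sq_mul_le.trans_lt W.pow_three_mul_lt_map_prime

lemma valGe_pow_map_x₁_sub (W : WittExtension p v w b m a μ x₁ x₂ σ) (k : ℕ) :
    ValGe w (w (p : L) - p * (p - 1) * b) ((σ ^ k) x₁ - (x₁ + k)) := by
  induction k with
  | zero => simpa using ValGe.zero
  | succ k ih =>
    have h : (σ ^ (k + 1)) x₁ - (x₁ + (k + 1 : ℕ)) =
        σ ((σ ^ k) x₁ - (x₁ + k)) + (σ x₁ - (x₁ + 1)) := by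
      rw [pow_succ', AlgEquiv.mul_apply, map_sub, map_add, map_natCast]
      push_cast
      ring
    rw [h]
    exact W.top.valGe_add (W.valGe_algEquiv σ ih) W.valGe_map_x₁_sub

lemma artinSchreier_x₂_sub (W : WittExtension p v w b m a μ x₁ x₂ σ) :
    artinSchreier p x₂ - artinSchreier p (algebraMap F L μ * x₁) =
      -(algebraMap F L μ ^ p * x₁) +
        (algebraMap F L μ * x₁ + wittD p x₁ (algebraMap F L a)) := by
  have h₁ := W.artinSchreier_x₁
  rw [artinSchreier] at h₁
  rw [W.artinSchreier_x₂, map_mul, map_pow, artinSchreier, mul_pow]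
  linear_combination -algebraMap F L μ ^ p * h₁

lemma one_le_map_prime_base [CharZero F] (W : WittExtension p v w b m a μ x₁ x₂ σ) :
    1 ≤ v (p : F) := by
  have h : 0 < (p : ℤ) ^ 2 * v (p : F) := by
    rw [← Nat.cast_pow, ← W.map_natCast W.prime.ne_zero]
    linarith [W.two_mul_sq_mul_lt_map_prime, W.two_mul_mul_le, W.mul_pos]
  exact pos_of_mul_pos_right h (sq_nonneg (p : ℤ))

section CharZero

variable [CharZero L]

lemma map_x₁ (W : WittExtension p v w b m a μ x₁ x₂ σ) : x₁ ≠ 0 ∧ w x₁ = -(p * b) := by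
  have hwp : p * 0 < w (p : L) := by
    linarith [W.two_mul_sq_mul_lt_map_prime, W.two_mul_mul_le, W.mul_pos]
  refine W.top.map_of_artinSchreier_sub W.prime (y := 0) (a := algebraMap F L a) le_rfl
    W.mul_pos hwp ValGe.zero ?_ (by simpa using W.a_ne_zero) (by rw [W.map_algebraMap_a]; ring)
  rw [zero_add, W.artinSchreier_x₁]
  simp [artinSchreier, W.prime.ne_zero]

lemma valGe_x₁ (W : WittExtension p v w b m a μ x₁ x₂ σ) : ValGe w (-(p * b)) x₁ :=
  Or.inr W.map_x₁.2.ge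

lemma valGe_μ_mul_x₁ (W : WittExtension p v w b m a μ x₁ x₂ σ) :
    ValGe w (-((p : ℤ) ^ 2 * m + p * b)) (algebraMap F L μ * x₁) :=
  (W.top.valGe_mul (Or.inr W.map_algebraMap_μ.ge) W.valGe_x₁).mono (by linarith)

lemma valGe_wittD_x₁_one (W : WittExtension p v w b m a μ x₁ x₂ σ) :
    ValGe w (-(((p : ℤ) - 1) * (p * b))) (wittD p x₁ 1) := by
  simpa using W.top.valGe_wittD W.prime (t := 0) W.mul_pos.le W.valGe_x₁
    (by simpa using W.top.valGe_one)

lemma map_artinSchreier_x₂_sub (W : WittExtension p v w b m a μ x₁ x₂ σ) :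
    artinSchreier p x₂ - artinSchreier p (algebraMap F L μ * x₁) ≠ 0 ∧
      w (artinSchreier p x₂ - artinSchreier p (algebraMap F L μ * x₁)) =
        -(p * ((p : ℤ) ^ 2 * m + b)) := by
  have hb := W.b_pos
  have h2b := W.two_mul_le
  have h2pb := W.two_mul_mul_le
  have h2sq := W.two_mul_sq_mul_le
  have hM := W.sq_mul_lt
  have hpM : 0 < ((p : ℤ) - 1) * ((p : ℤ) ^ 2 * m + b - p ^ 2 * b) :=
    _root_.mul_pos (by linarith [W.two_le]) (sub_pos.2 hM)
  have hμ0 : algebraMap F L μ ^ p ≠ 0 := pow_ne_zero p (by simpa using W.μ_ne_zero)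
  have hlead0 : -(algebraMap F L μ ^ p * x₁) ≠ 0 := neg_ne_zero.2 (mul_ne_zero hμ0 W.map_x₁.1)
  have hlead : w (-(algebraMap F L μ ^ p * x₁)) = -(p * ((p : ℤ) ^ 2 * m + b)) := by
    rw [W.top.map_neg, W.top.map_mul _ _ hμ0 W.map_x₁.1,
      W.top.map_pow (by simpa using W.μ_ne_zero), W.map_algebraMap_μ, W.map_x₁.2]
    ring
  have hD : ValGe w (-(((p : ℤ) - 1) * ((p : ℤ) ^ 2 * b) + p * b))
      (wittD p x₁ (algebraMap F L a)) := by
    rw [wittD_comm]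
    exact W.top.valGe_wittD W.prime (by linarith) (Or.inr W.map_algebraMap_a.ge) W.valGe_x₁
  rw [W.artinSchreier_x₂_sub, ← hlead]
  exact W.top.map_add_of_valGe hlead0 (hlead.symm ▸ W.top.valGe_add
    (W.valGe_μ_mul_x₁.mono (by linarith)) (hD.mono (by linarith)))

lemma map_x₂_sub (W : WittExtension p v w b m a μ x₁ x₂ σ) :
    x₂ - algebraMap F L μ * x₁ ≠ 0 ∧
      w (x₂ - algebraMap F L μ * x₁) = -((p : ℤ) ^ 2 * m + b) := by
  obtain ⟨hne, hval⟩ := W.map_artinSchreier_x₂_sub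
  have hM : 0 < (p : ℤ) ^ 2 * m := _root_.mul_pos (pow_pos (by linarith [W.two_le]) 2) W.m_pos
  refine W.top.map_of_artinSchreier_sub W.prime (r := p * b) W.mul_pos.le
    (by linarith [W.b_pos]) ?_ (W.valGe_μ_mul_x₁.mono (by linarith [W.b_pos]))
    (by rw [add_sub_cancel]) hne hval
  linarith [W.two_mul_sq_mul_lt_map_prime, W.two_mul_le, W.two_mul_mul_le, W.mul_pos, W.b_pos]

lemma valGe_x₂ (W : WittExtension p v w b m a μ x₁ x₂ σ) :
    ValGe w (-((p : ℤ) ^ 2 * m + p * b)) x₂ := by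
  have h : ValGe w (-((p : ℤ) ^ 2 * m + p * b)) (x₂ - algebraMap F L μ * x₁) := by
    refine Or.inr ?_
    rw [W.map_x₂_sub.2]
    linarith [W.two_mul_le, W.b_pos]
  simpa using W.top.valGe_add h W.valGe_μ_mul_x₁

lemma generatorPair [CharZero F] (W : WittExtension p v w b m a μ x₁ x₂ σ) :
    GeneratorPair (F := F) p v w b ((p : ℤ) ^ 2 * m + b) x₁ (x₂ - algebraMap F L μ * x₁) where
  toTotallyRamified := W.toTotallyRamified
  prime := W.prime
  one_le_map_prime_base := W.one_le_map_prime_base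
  b₁_pos := W.b_pos
  b₁_lt_b₂ := by nlinarith [W.m_pos, W.two_le]
  not_dvd := W.not_dvd
  dvd_sub := ⟨m, by ring⟩
  X_ne_zero := W.map_x₁.1
  map_X := W.map_x₁.2
  Y_ne_zero := W.map_x₂_sub.1
  map_Y := W.map_x₂_sub.2

/-- Since `x₁ + a = x₁ ^ p`, the cocycle identity of `wittD` compares
`wittD p x₁ 1 ^ p - wittD p x₁ 1` with the change of `wittD p x₁ a` under `x₁ ↦ x₁ + 1`. -/
lemma artinSchreier_map_x₂_sub (W : WittExtension p v w b m a μ x₁ x₂ σ) :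
    artinSchreier p (σ x₂) - artinSchreier p (x₂ + wittD p x₁ 1) =
      (wittD p (σ x₁) (algebraMap F L a) - wittD p (x₁ + 1) (algebraMap F L a)) -
        (wittD p x₁ 1 ^ p - wittD p (x₁ ^ p) 1) + p * wittD p x₂ (wittD p x₁ 1) := by
  have hx₁ : x₁ + algebraMap F L a = x₁ ^ p := by
    rw [← W.artinSchreier_x₁, artinSchreier, add_sub_cancel]
  have hcocycle := wittD_cocycle (p := p) x₁ (algebraMap F L a) 1
  rw [hx₁] at hcocycle
  have hx₂ := W.artinSchreier_x₂
  rw [artinSchreier] at hx₂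
  rw [← map_artinSchreier, W.artinSchreier_x₂, map_add, map_wittD, AlgEquiv.commutes,
    AlgEquiv.commutes, artinSchreier, add_pow_eq_sub_wittD W.prime]
  linear_combination -hcocycle - hx₂

lemma valGe_artinSchreier_map_x₂_sub (W : WittExtension p v w b m a μ x₁ x₂ σ) :
    ValGe w (p * b) (artinSchreier p (σ x₂) - artinSchreier p (x₂ + wittD p x₁ 1)) := by
  have hw := W.top
  have hb := W.b_pos
  have h2b := W.two_mul_le
  have h2pb := W.two_mul_mul_le
  have hE := W.pow_three_mul_lt_map_prime
  have hx₁ := W.valGe_x₁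
  have hx₁_add : ValGe w (-(p * b)) (x₁ + 1) :=
    hw.valGe_add hx₁ (hw.valGe_one.mono (by linarith [W.mul_pos]))
  have hσx₁ : ValGe w (-(p * b)) (σ x₁) := W.valGe_algEquiv σ hx₁
  rw [W.artinSchreier_map_x₂_sub]
  refine hw.valGe_add (hw.valGe_sub ?_ ?_) ?_
  · exact (hw.valGe_wittD_sub W.prime (t := (p : ℤ) ^ 2 * b) (by linarith) hσx₁ hx₁_add
      W.valGe_map_x₁_sub (Or.inr W.map_algebraMap_a.ge)).mono (by linarith)
  · exact (hw.valGe_wittD_one_pow_sub W.prime W.mul_pos.le hx₁).mono (by linarith)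
  · refine (hw.valGe_mul (Or.inr le_rfl) (hw.valGe_wittD W.prime ?_ W.valGe_x₂
      W.valGe_wittD_x₁_one)).mono ?_
    · linarith [W.sq_mul_lt]
    · linarith [W.lt_map_prime, W.sq_mul_lt]

lemma valGe_map_x₂_sub_mul (W : WittExtension p v w b m a μ x₁ x₂ σ) :
    ValGe w (p * b) (σ x₂ - (x₂ + wittD p x₁ 1)) := by
  have hpb := W.mul_pos
  have h2b := W.two_mul_le
  have h2pb := W.two_mul_mul_le
  have hM := W.sq_mul_lt
  refine W.top.valGe_of_artinSchreier_sub W.prime (y := x₂ + wittD p x₁ 1)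
    (s := (p : ℤ) ^ 2 * m + p * b) (by linarith) ?_
    (W.top.valGe_add W.valGe_x₂ (W.valGe_wittD_x₁_one.mono (by linarith))) W.valGe_map_x₂_sub
    (by simpa using W.valGe_artinSchreier_map_x₂_sub)
  linarith [W.lt_map_prime]

lemma pow_map_x₁ (W : WittExtension p v w b m a μ x₁ x₂ σ) : (σ ^ p) x₁ = x₁ := by
  have h2pb := W.two_mul_mul_le
  have hE := W.two_mul_sq_mul_lt_map_prime
  set c := (σ ^ p) x₁ - x₁ with hc
  have hc1 : ValGe w 1 c := by
    have h := W.top.valGe_add ((W.valGe_pow_map_x₁_sub p).mono (by linarith [W.mul_pos]))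
      (y := (p : L)) (Or.inr (by linarith [W.mul_pos, W.b_pos] : 1 ≤ w (p : L)))
    rwa [← sub_sub, sub_add_cancel] at h
  have hroot : artinSchreier p (x₁ + c) - artinSchreier p x₁ = 0 := by
    rw [hc, add_sub_cancel, ← map_artinSchreier, W.artinSchreier_x₁, AlgEquiv.commutes, sub_self]
  rcases W.top.valGe_of_artinSchreier_sub W.prime (r := w c + 1) W.mul_pos.le
    (by linarith [W.mul_pos, W.b_pos]) W.valGe_x₁ hc1 (Or.inl hroot) with h0 | h0
  · exact sub_eq_zero.1 h0
  · omega

lemma pow_prime_map_x₂_sub (W : WittExtension p v w b m a μ x₁ x₂ σ) :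
    (σ ^ p) x₂ - x₂ - 1 =
      ∑ k ∈ Finset.range p, ((wittD p ((σ ^ k) x₁) 1 - wittD p (x₁ + k) 1) +
        (σ ^ k) (σ x₂ - (x₂ + wittD p x₁ 1))) + (wittD p x₁ p - (p : L) ^ (p - 1)) := by
  rw [pow_map_sub_eq_sum σ x₁, Finset.sum_add_distrib, Finset.sum_add_distrib,
    Finset.sum_sub_distrib, sum_wittD_one W.prime]
  ring

lemma valGe_pow_map_x₂_sub (W : WittExtension p v w b m a μ x₁ x₂ σ) :
    ValGe w (p * b) ((σ ^ p) x₂ - x₂ - 1) := by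
  have hw := W.top
  have hb := W.mul_pos
  have h2b := W.two_mul_le
  have h2pb := W.two_mul_mul_le
  have hE := W.two_mul_sq_mul_lt_map_prime
  rw [W.pow_prime_map_x₂_sub]
  refine hw.valGe_add (hw.valGe_sum fun k _ => hw.valGe_add ?_
    (W.valGe_algEquiv _ W.valGe_map_x₂_sub_mul)) (hw.valGe_sub ?_ ?_)
  · exact (hw.valGe_wittD_sub W.prime (t := p * b) le_rfl (W.valGe_algEquiv _ W.valGe_x₁)
      (hw.valGe_add W.valGe_x₁ ((hw.valGe_natCast k).mono (by linarith)))
      (W.valGe_pow_map_x₁_sub k) (hw.valGe_one.mono (by linarith))).mono (by linarith [W.b_pos])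
  · exact (hw.valGe_wittD W.prime (t := -w (p : L)) (by linarith [W.b_pos]) W.valGe_x₁
      (Or.inr (by linarith))).mono (by linarith [W.b_pos])
  · refine (hw.valGe_pow (Or.inr le_rfl) (p - 1)).mono ?_
    rw [Nat.cast_pred W.prime.pos]
    nlinarith [W.two_le, W.b_pos]

lemma valGe_map_sub (W : WittExtension p v w b m a μ x₁ x₂ σ) :
    ValGe w (-((p : ℤ) ^ 2 * m + b) + p * b + 1)
      (σ (x₂ - algebraMap F L μ * x₁) + algebraMap F L μ - (x₂ - algebraMap F L μ * x₁)) := by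
  have hM := W.sq_mul_lt
  have h2b := W.two_mul_le
  have h2pb := W.two_mul_mul_le
  have hE := W.two_mul_sq_mul_lt_map_prime
  have h : σ (x₂ - algebraMap F L μ * x₁) + algebraMap F L μ - (x₂ - algebraMap F L μ * x₁) =
      wittD p x₁ 1 + (σ x₂ - (x₂ + wittD p x₁ 1)) -
        algebraMap F L μ * (σ x₁ - (x₁ + 1)) := by
    rw [map_sub, map_mul, AlgEquiv.commutes]
    ring
  rw [h]
  refine W.top.valGe_sub (W.top.valGe_add (W.valGe_wittD_x₁_one.mono (by linarith))
    (W.valGe_map_x₂_sub_mul.mono (by linarith [W.b_pos])))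
    ((W.top.valGe_mul (Or.inr W.map_algebraMap_μ.ge) W.valGe_map_x₁_sub).mono
      (by linarith [W.b_pos]))

lemma nearShift [CharZero F] (W : WittExtension p v w b m a μ x₁ x₂ σ) :
    NearShift p v w b ((p : ℤ) ^ 2 * m + b) m x₁ (x₂ - algebraMap F L μ * x₁) σ μ where
  toGeneratorPair := W.generatorPair
  eq_add := rfl
  valGe_μ := Or.inr W.map_μ.ge
  valGe_map_X_sub := W.valGe_map_x₁_sub.mono
    (by linarith [W.two_mul_sq_mul_lt_map_prime, W.two_mul_le, W.two_mul_mul_le, W.mul_pos])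
  valGe_map_Y_sub := W.valGe_map_sub
  pow_map_X := W.pow_map_x₁
  valGe_pow_map_Y_sub := by
    rw [map_sub, map_mul, AlgEquiv.commutes, W.pow_map_x₁, sub_add_eq_add_sub,
      sub_sub_sub_cancel_right, ← sub_sub]
    exact W.valGe_pow_map_x₂_sub
  pow_sq := W.pow_sq
  sq_mul_lt := W.sq_mul_lt
  lt_map_prime := W.lt_map_prime

end CharZero

end WittExtension

end WittExtension

section AssociatedOrder

/-- The image of the group algebra `F[Aut L]` in the endomorphisms of `L`. -/
def groupAlgebra (F L : Type*) [Field F] [Field L] [Algebra F L] :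
    Subalgebra F (Module.End F L) :=
  (Submodule.span F
    {f : Module.End F L | ∃ σ : L ≃ₐ[F] L, f = (σ.toLinearMap : Module.End F L)}).toSubalgebra
    (Submodule.subset_span ⟨1, rfl⟩) (by
      intro f g hf hg
      have h := Submodule.mul_mem_mul hf hg
      rw [Submodule.span_mul_span] at h
      refine Submodule.span_mono ?_ h
      rintro _ ⟨_, ⟨σ, rfl⟩, _, ⟨τ, rfl⟩, rfl⟩
      exact ⟨σ * τ, rfl⟩)

variable {F L : Type*} [Field F] [Field L] [Algebra F L]

lemma toLinearMap_mem_groupAlgebra (σ : L ≃ₐ[F] L) :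
    (σ.toLinearMap : Module.End F L) ∈ groupAlgebra F L :=
  Submodule.subset_span ⟨σ, rfl⟩

lemma finrank_groupAlgebra_le [IsGalois F L] [FiniteDimensional F L] :
    Module.finrank F (Subalgebra.toSubmodule (groupAlgebra F L)) ≤ Module.finrank F L := by
  have hrange : {f : Module.End F L | ∃ σ : L ≃ₐ[F] L, f = σ.toLinearMap} =
      Set.range fun σ : L ≃ₐ[F] L => (σ.toLinearMap : Module.End F L) :=
    Set.ext fun f => exists_congr fun σ => eq_comm
  have h := finrank_range_le_card (R := F)
    fun σ : L ≃ₐ[F] L => (σ.toLinearMap : Module.End F L)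
  rwa [Set.finrank, ← hrange, ← Nat.card_eq_fintype_card, IsGalois.card_aut_eq_finrank] at h

lemma pow_finrank_eq_one [IsGalois F L] [FiniteDimensional F L] (σ : L ≃ₐ[F] L) :
    σ ^ Module.finrank F L = 1 := by
  rw [← IsGalois.card_aut_eq_finrank F L]
  exact pow_card_eq_one'

lemma psi₂_mem_groupAlgebra (p : ℕ) (σ : L ≃ₐ[F] L) : psi₂ p σ ∈ groupAlgebra F L :=
  sub_mem (pow_mem (toLinearMap_mem_groupAlgebra σ) p) (one_mem _)

variable [CharZero F]

lemma psi₁_mem_groupAlgebra (p : ℕ) (σ : L ≃ₐ[F] L) (μ : F) : psi₁ p σ μ ∈ groupAlgebra F L :=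
  sub_mem (mul_mem (toLinearMap_mem_groupAlgebra σ) (sum_mem fun k _ =>
    Subalgebra.smul_mem _ (pow_mem (psi₂_mem_groupAlgebra p σ) k) _)) (one_mem _)

lemma psiMonomial_mem_groupAlgebra (p : ℕ) (σ : L ≃ₐ[F] L) (μ : F) (a : ℕ) :
    psiMonomial p σ μ a ∈ groupAlgebra F L := by
  rw [psiMonomial]
  split_ifs
  · exact mul_mem (pow_mem (psi₂_mem_groupAlgebra p σ) _) (pow_mem (psi₁_mem_groupAlgebra p σ μ) _)
  · exact zero_mem _

end AssociatedOrder

/-- Theorem 4.5(a): if `p²e₀ − (p+1)b₂ + (p−1)b₁ > 0`, the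
associated order `𝔄 = {α ∈ K₀[G] : α·𝔒₂ ⊆ 𝔒₂}` of `𝔒₂` has `𝔒₀`-basis
`{π₀^{−w_j}·Ψ^{(j)}}_{j=0}^{p²−1}`.  Here `K₀[G]` is realized as the `K₀`-span
of `G` inside `End_{K₀}(K₂)`, and the basis property is expressed as linear
independence together with: `α` lies in the associated order iff `α` is an
`𝔒₀`-linear combination of the `π₀^{−w_j}·Ψ^{(j)}`. -/
theorem statement18
    (p : ℕ) (hp : p.Prime)
    (K0 K2 : Type*) [Field K0] [Field K2] [CharZero K0] [CharZero K2]
    [Algebra K0 K2] [IsGalois K0 K2] [FiniteDimensional K0 K2]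
    (hdeg : Module.finrank K0 K2 = p ^ 2)
    (hcyc : IsCyclic (K2 ≃ₐ[K0] K2))
    (v0 : K0 → ℤ) (v2 : K2 → ℤ)
    (hv0 : IsDiscVal v0) (hv2 : IsDiscVal v2)
    (e0 : ℤ) (he0 : e0 = v0 (p : K0)) (he0pos : 1 ≤ e0)
    (hram : ∀ x : K0, x ≠ 0 → v2 (algebraMap K0 K2 x) = (p : ℤ) ^ 2 * v0 x)
    (a1 μ a2 : K0) (ha1 : a1 ≠ 0) (hμ0 : μ ≠ 0)
    (hwitt : ∀ y : K0, y ^ p - y ≠ a1)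
    (hnd : ¬ ((p : ℤ) ∣ v0 a1))
    (hneg : v0 a1 < 0)
    (hbd : -((p : ℤ) * e0) < ((p : ℤ) ^ 2 - 1) * v0 a1)
    (m : ℤ) (hm : m = -v0 μ) (hmpos : 0 < m)
    (hmu1 : (p : ℤ) ^ 2 * (p - 1) * m - (2 * p * (p - 1) + 1) * v0 a1 < (p : ℤ) ^ 2 * e0)
    (hmu2 : -(((p : ℤ) ^ 2 - 1) * v0 a1) < (p : ℤ) ^ 2 * m)
    (ha2 : a2 = μ ^ p * a1)
    (x1 x2 : K2)
    (hx1 : x1 ^ p - x1 = algebraMap K0 K2 a1)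
    (hx2 : x2 ^ p - x2 = algebraMap K0 K2 a2 +
      (x1 ^ p + (algebraMap K0 K2 a1) ^ p - (x1 + algebraMap K0 K2 a1) ^ p) / (p : K2))
    (hgen : Algebra.adjoin K0 {x1, x2} = ⊤)
    (b1 b2 : ℤ) (hb1 : b1 = -v0 a1) (hb2 : b2 = (p : ℤ) ^ 2 * m + b1)
    (σ1 : K2 ≃ₐ[K0] K2) (ε δ' : K2)
    (hσ1x1 : σ1 x1 = x1 + 1 + ε)
    (hε : ε ≠ 0) (hεv : v2 ε = (p : ℤ) ^ 2 * e0 - p * (p - 1) * b1)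
    (hσ1x2 : σ1 x2 = x2 + (x1 ^ p + 1 - (x1 + 1) ^ p) / (p : K2) + δ')
    (hδ' : δ' = 0 ∨ 0 < v2 δ')
    (Ψ1 Ψ2 : Module.End K0 K2)
    (hΨ2 : Ψ2 = ((σ1 ^ p).toLinearMap : Module.End K0 K2) - 1)
    (hΨ1 : Ψ1 = (σ1.toLinearMap : Module.End K0 K2) *
      (∑ i ∈ Finset.range p,
        ((∏ k ∈ Finset.range i, (μ - (k : K0))) / (Nat.factorial i : K0)) • Ψ2 ^ i) - 1)
    (π0 : K0) (hπ0 : π0 ≠ 0) (hπ0v : v0 π0 = 1)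
    (ρ0 : K2) (hρ0 : ρ0 ≠ 0) (hρ0v : v2 ρ0 = b2 % (p : ℤ) ^ 2)
    (d : ℕ → ℤ)
    (hd : ∀ a : ℕ, a < p ^ 2 →
      d a = Int.fdiv ((1 + ((a / p : ℕ) : ℤ)) * b2 + ((a % p : ℕ) : ℤ) * (p : ℤ) * b1)
        ((p : ℤ) ^ 2))
    (Ψf : ℕ → Module.End K0 K2)
    (hΨf : ∀ a : ℕ, Ψf a = if a < p ^ 2 then Ψ2 ^ (a / p) * Ψ1 ^ (a % p) else 0)
    (ρ : K2) (hρ : ρ = algebraMap K0 K2 (π0 ^ d 0) * ρ0)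
    (ρf : ℕ → K2) (hρf : ∀ a : ℕ, ρf a = algebraMap K0 K2 (π0 ^ (-d a)) * Ψf a ρ)
    (wj : ℕ → ℤ)
    (hwj : ∀ j : ℕ, j < p ^ 2 →
      IsLeast {x : ℤ | ∃ a : ℕ, a < p ^ 2 - j ∧ x = d (j + a) - d a} (wj j))
    (hbig : 0 < (p : ℤ) ^ 2 * e0 - (p + 1) * b2 + (p - 1) * b1) :
    LinearIndependent K0 (fun j : Fin (p ^ 2) => π0 ^ (-wj j) • Ψf j) ∧
    (∀ α : Module.End K0 K2,
      (α ∈ Submodule.span K0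
          {f : Module.End K0 K2 | ∃ σ : K2 ≃ₐ[K0] K2, f = (σ.toLinearMap : Module.End K0 K2)} ∧
        ∀ z : K2, (z = 0 ∨ 0 ≤ v2 z) → (α z = 0 ∨ 0 ≤ v2 (α z))) ↔
      (∃ c : Fin (p ^ 2) → K0, (∀ i, c i = 0 ∨ 0 ≤ v0 (c i)) ∧
        α = ∑ j, c j • (π0 ^ (-wj j) • Ψf j))) := by
  have hv2p : v2 (p : K2) = (p : ℤ) ^ 2 * e0 := by
    rw [he0, ← hram _ (Nat.cast_ne_zero.2 hp.ne_zero), map_natCast]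
  have W : WittExtension p v0 v2 b1 m a1 μ x1 x2 σ1 :=
    { base := hv0, top := hv2, finrank_eq := hdeg, pos := pow_pos hp.pos 2, prime := hp
      map_algebraMap := by simpa only [Nat.cast_pow] using hram
      a_ne_zero := ha1, map_a := by omega, b_pos := by omega, not_dvd := by rwa [hb1, dvd_neg]
      μ_ne_zero := hμ0, map_μ := by omega
      sq_mul_lt := by rw [hb1]; linarith
      lt_map_prime := by rw [hv2p, ← hb2]; linarith
      artinSchreier_x₁ := hx1, artinSchreier_x₂ := by rw [artinSchreier, hx2, ha2, wittD]
      valGe_map_x₁_sub := by rw [hσ1x1, add_sub_cancel_left, hv2p]; exact Or.inr hεv.ge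
      valGe_map_x₂_sub := by rw [hσ1x2, wittD, one_pow, add_sub_cancel_left]; exact hδ'
      pow_sq := hdeg ▸ pow_finrank_eq_one σ1 }
  obtain rfl : Ψf = psiMonomial p σ1 μ := funext fun a => by
    simp only [hΨf, hΨ1, hΨ2, psiMonomial, psi₁, psi₂_eq, truncatedPow, ring_choose_eq_prod_div]
  have E : ScaffoldExponents (p ^ 2) (level p b1 b2) d wj :=
    ⟨fun a ha => by rw [hd a ha, Int.fdiv_eq_ediv_of_nonneg _ (sq_nonneg _), level, Nat.cast_pow],
      hwj⟩
  obtain ⟨_, S⟩ := W.nearShift.exists_scaffold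
  rw [← hb2] at S
  exact ⟨S.linearIndependent_smul E hπ0 hπ0v, S.mem_and_forall_valGe_iff E hπ0 hπ0v
    (A := Subalgebra.toSubmodule (groupAlgebra K0 K2)) (hdeg ▸ finrank_groupAlgebra_le)
    fun j _ => psiMonomial_mem_groupAlgebra p σ1 μ j⟩
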